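/- arXiv:2304.07664 — 3 statements merged into one kernel-verified Lean document; each statement's English description precedes it below -/
import Mathlib

section
/- Let m be a positive real number and set M := 2^m + log₂(ln 2). Then for every x ∈ [0,1], one has 1 − (1 − x^(2^m))^(2^M) ≥ (1 − (1 − x)^(2^m))^(2^M). -/
/-!
Put `a = 2 ^ m > 1` and `A = 2 ^ M = 2 ^ a * log 2 > 1`. The claim is that
`D x = 1 - (1 - x ^ a) ^ A - (1 - (1 - x) ^ a) ^ A` is nonnegative on `[0, 1]`; since `D` is
symmetric about `1 / 2`, only `[0, 1 / 2]` matters.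

* `D 0 = 0`, and `D (1 / 2) ≥ 0` follows from `1 - t ≤ exp (-t)`: the value of `A` is exactly
  the one that turns this into `(1 - 2 ^ (-a)) ^ A ≤ 1 / 2`.
* The derivative is `D' x = f x - f (1 - x)` with `f = A * a * exp ∘ ell`, so its sign is that of
  `R x = ell x - ell (1 - x)`, where `ell` is the logarithm of `x ^ (a - 1) * (1 - x ^ a) ^ (A - 1)`.
* `x * (1 - x) * R' x = (a - 1) - (A - 1) * a * (k x + k (1 - x) - 1)` with
  `k x = (1 - x) / (1 - x ^ a)`. The function `k` is convex on `(0, 1)` (`convexOn_kfun`), so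
  `k x + k (1 - x)` decreases on `(0, 1 / 2]`, and `R'` changes sign there at most once, from
  negative to positive.
* If `D` had a negative minimum at an interior `c`, then `R c = 0 = R (1 / 2)`, hence `R ≤ 0` on
  `[c, 1 / 2]` (`R_nonpos`), so `D` decreases there and `D c ≥ D (1 / 2) ≥ 0`, a contradiction.
-/

namespace PowerIneq

open Real Set

/-- The reciprocal of the slope of `t ↦ t ^ a` between `x` and `1`. -/
noncomputable def kfun (a x : ℝ) : ℝ := (1 - x) / (1 - x ^ a)

/-- The logarithm of `x ^ (a - 1) * (1 - x ^ a) ^ (A - 1)` on `(0, 1)`. -/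
noncomputable def ell (a A x : ℝ) : ℝ := (a - 1) * log x + (A - 1) * log (1 - x ^ a)

/-- The difference of the two sides of the inequality. -/
noncomputable def D (a A x : ℝ) : ℝ := 1 - (1 - x ^ a) ^ A - (1 - (1 - x) ^ a) ^ A

lemma one_sub_rpow_pos {a x : ℝ} (ha : 1 < a) (hx : x ∈ Ioo (0 : ℝ) 1) : 0 < 1 - x ^ a := by
  have := rpow_lt_one hx.1.le hx.2 (by linarith : 0 < a)
  linarith

lemma rpow_eq_mul {a x : ℝ} (hx : 0 < x) : x ^ a = x * x ^ (a - 1) := by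
  rw [rpow_sub_one hx.ne']; field_simp

/-- Young's inequality `x ^ (a - 1) ≤ 1 / a + (1 - 1 / a) * x ^ a`, cleared of denominators. -/
lemma young_aux {a x : ℝ} (ha : 1 < a) (hx : 0 < x) :
    a * x ^ (a - 1) ≤ 1 + (a - 1) * x ^ a := by
  have h := Real.geom_mean_le_arith_mean2_weighted (w₁ := 1 / a) (w₂ := (a - 1) / a)
    (p₁ := 1) (p₂ := x ^ a) (by positivity) (div_nonneg (by linarith) (by linarith)) zero_le_one
    (by positivity) (by field_simp; ring)
  have ha0 : a ≠ 0 := by positivity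
  rw [one_rpow, one_mul, ← rpow_mul hx.le, mul_div_cancel₀ _ ha0] at h
  have h2 := mul_le_mul_of_nonneg_left h (by linarith : 0 ≤ a)
  refine h2.trans (le_of_eq ?_)
  field_simp

/-- The numerator of the second derivative of `kfun a` is nonnegative: it vanishes at `1`, and
its derivative is nonpositive by `young_aux`. -/
lemma numerator_nonneg {a x : ℝ} (ha : 1 < a) (hx : x ∈ Ioo (0 : ℝ) 1) :
    0 ≤ (a - 1) - (a + 1) * x + (a + 1) * x ^ a - (a - 1) * (x * x ^ a) := by
  set G : ℝ → ℝ := fun x => (a - 1) - (a + 1) * x + (a + 1) * x ^ a - (a - 1) * (x * x ^ a)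
    with hG
  have hd : ∀ y : ℝ, 0 < y →
      HasDerivAt G (-(a + 1) * (1 - a * y ^ (a - 1) + (a - 1) * y ^ a)) y := by
    intro y hy
    have h1 := Real.hasDerivAt_rpow_const (x := y) (p := a) (Or.inl hy.ne')
    have h2 := ((((hasDerivAt_id y).const_mul (a + 1)).const_sub (a - 1)).add
      (h1.const_mul (a + 1))).sub (((hasDerivAt_id y).mul h1).const_mul (a - 1))
    refine h2.congr_deriv ?_
    have := rpow_eq_mul (a := a) hy
    simp only [id]
    rw [this]; ring
  have hanti : AntitoneOn G (Icc x 1) := by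
    apply antitoneOn_of_deriv_nonpos (convex_Icc x 1)
    · intro y hy
      exact (hd y (hx.1.trans_le hy.1)).continuousAt.continuousWithinAt
    · intro y hy
      rw [interior_Icc] at hy
      exact (hd y (hx.1.trans hy.1)).differentiableAt.differentiableWithinAt
    · intro y hy
      rw [interior_Icc] at hy
      have hy0 := hx.1.trans hy.1
      rw [(hd y hy0).deriv]
      have := young_aux ha hy0
      nlinarith
  have h := hanti ⟨le_rfl, hx.2.le⟩ ⟨hx.2.le, le_rfl⟩ hx.2.le
  have h1 : G 1 = 0 := by simp [hG]
  rw [h1] at h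
  exact h

lemma convexOn_kfun {a : ℝ} (ha : 1 < a) : ConvexOn ℝ (Ioo (0 : ℝ) 1) (kfun a) := by
  have h1 : ∀ x ∈ Ioo (0 : ℝ) 1, HasDerivAt (kfun a)
      ((-(1 - x ^ a) + (1 - x) * (a * x ^ (a - 1))) / (1 - x ^ a) ^ 2) x := by
    intro x hx
    have hp := one_sub_rpow_pos ha hx
    have hr := Real.hasDerivAt_rpow_const (x := x) (p := a) (Or.inl hx.1.ne')
    refine (((hasDerivAt_id x).const_sub 1).div (hr.const_sub 1) hp.ne').congr_deriv ?_
    simp only [id]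
    ring
  have h2 : ∀ x ∈ Ioo (0 : ℝ) 1, HasDerivAt
      (fun x => (-(1 - x ^ a) + (1 - x) * (a * x ^ (a - 1))) / (1 - x ^ a) ^ 2)
      (a * x ^ (a - 1 - 1) *
        ((a - 1) - (a + 1) * x + (a + 1) * x ^ a - (a - 1) * (x * x ^ a)) / (1 - x ^ a) ^ 3) x := by
    intro x hx
    have hp := one_sub_rpow_pos ha hx
    have hr := Real.hasDerivAt_rpow_const (x := x) (p := a) (Or.inl hx.1.ne')
    have hr' := Real.hasDerivAt_rpow_const (x := x) (p := a - 1) (Or.inl hx.1.ne')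
    refine ((((hr.const_sub 1).neg).add
      (((hasDerivAt_id x).const_sub 1).mul (hr'.const_mul a))).div
      ((hr.const_sub 1).pow 2) (pow_ne_zero 2 hp.ne')).congr_deriv ?_
    simp only [id, Pi.add_apply, Pi.mul_apply, Pi.neg_apply, Pi.pow_apply]
    have e1 := rpow_eq_mul (a := a) hx.1
    have e2 := rpow_eq_mul (a := a - 1) hx.1
    have hne := hp.ne'
    rw [e1, e2] at hne ⊢
    generalize x ^ (a - 1 - 1) = q at hne ⊢
    rw [div_eq_div_iff (pow_ne_zero 2 (pow_ne_zero 2 hne)) (pow_ne_zero 3 hne)]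
    ring
  apply convexOn_of_hasDerivWithinAt2_nonneg (convex_Ioo 0 1)
    (f' := fun x => (-(1 - x ^ a) + (1 - x) * (a * x ^ (a - 1))) / (1 - x ^ a) ^ 2)
    (f'' := fun x => a * x ^ (a - 1 - 1) *
        ((a - 1) - (a + 1) * x + (a + 1) * x ^ a - (a - 1) * (x * x ^ a)) / (1 - x ^ a) ^ 3)
  · intro x hx
    exact (h1 x hx).continuousAt.continuousWithinAt
  · intro x hx
    rw [interior_Ioo] at hx ⊢
    exact (h1 x hx).hasDerivWithinAt
  · intro x hx
    rw [interior_Ioo] at hx ⊢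
    exact (h2 x hx).hasDerivWithinAt
  · intro x hx
    rw [interior_Ioo] at hx
    have hp := one_sub_rpow_pos ha hx
    have hn := numerator_nonneg ha hx
    have := rpow_pos_of_pos hx.1 (a - 1 - 1)
    positivity

/-- A convex function symmetrised about `1 / 2` decreases up to `1 / 2`. -/
lemma kfun_sum_anti {a x y : ℝ} (ha : 1 < a) (hx : 0 < x) (hxy : x < y) (hy : y < 1 / 2) :
    kfun a y + kfun a (1 - y) ≤ kfun a x + kfun a (1 - x) := by
  have hc := convexOn_kfun ha
  have hx' : x ∈ Ioo (0 : ℝ) 1 := ⟨hx, by linarith⟩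
  have hx'' : 1 - x ∈ Ioo (0 : ℝ) 1 := ⟨by linarith, by linarith⟩
  -- `y` and `1 - y` are the convex combinations of `x` and `1 - x` with weights `1 - t`, `t`.
  obtain ⟨t, ht0, ht1, ht⟩ : ∃ t : ℝ, 0 ≤ t ∧ t ≤ 1 ∧ t * (1 - 2 * x) = y - x := by
    have : 0 < 1 - 2 * x := by linarith
    refine ⟨(y - x) / (1 - 2 * x), div_nonneg (by linarith) this.le, ?_,
      div_mul_cancel₀ _ this.ne'⟩
    rw [div_le_one this]; linarith
  have e1 := hc.2 hx' hx'' (by linarith : 0 ≤ 1 - t) ht0 (by ring)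
  have e2 := hc.2 hx' hx'' ht0 (by linarith : 0 ≤ 1 - t) (by ring)
  simp only [smul_eq_mul] at e1 e2
  rw [show (1 - t) * x + t * (1 - x) = y by linarith] at e1
  rw [show t * x + (1 - t) * (1 - x) = 1 - y by linarith] at e2
  linarith

lemma hasDerivAt_ell {a A x : ℝ} (ha : 1 < a) (hx : x ∈ Ioo (0 : ℝ) 1) :
    HasDerivAt (ell a A)
      ((a - 1) / x - (A - 1) * (a * x ^ (a - 1) / (1 - x ^ a))) x := by
  have hp := one_sub_rpow_pos ha hx
  have hr := Real.hasDerivAt_rpow_const (x := x) (p := a) (Or.inl hx.1.ne')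
  refine (((Real.hasDerivAt_log hx.1.ne').const_mul (a - 1)).add
    (((hr.const_sub 1).log hp.ne').const_mul (A - 1))).congr_deriv ?_
  ring

lemma hasDerivAt_R {a A x : ℝ} (ha : 1 < a) (hx : x ∈ Ioo (0 : ℝ) 1) :
    HasDerivAt (fun x => ell a A x - ell a A (1 - x))
      (((a - 1) - (A - 1) * a * (kfun a x + kfun a (1 - x) - 1)) / (x * (1 - x))) x := by
  have hx' : 1 - x ∈ Ioo (0 : ℝ) 1 := ⟨by linarith [hx.2], by linarith [hx.1]⟩
  have h1 := hasDerivAt_ell (A := A) ha hx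
  have h2 := (hasDerivAt_ell (A := A) ha hx').comp x ((hasDerivAt_id x).const_sub 1)
  refine (h1.sub h2).congr_deriv ?_
  have hp := (one_sub_rpow_pos ha hx).ne'
  have hp' := (one_sub_rpow_pos ha hx').ne'
  have h0 := hx.1.ne'
  have h0' := hx'.1.ne'
  rw [kfun, kfun, rpow_sub_one h0, rpow_sub_one h0', sub_sub_cancel]
  generalize x ^ a = s at hp ⊢
  generalize (1 - x) ^ a = t at hp' ⊢
  field_simp
  ring

/-- Since `R x = ell x - ell (1 - x)` first decreases and then increases on `(0, 1 / 2]`, it is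
nonpositive between two of its zeros `c` and `1 / 2`. -/
lemma R_nonpos {a A c z : ℝ} (ha : 1 < a) (hA : 1 < A) (hc : 0 < c)
    (hc0 : ell a A c - ell a A (1 - c) = 0) (hcz : c < z) (hz : z < 1 / 2) :
    ell a A z - ell a A (1 - z) ≤ 0 := by
  by_contra! hpos
  have hd : ∀ y, c ≤ y → y ≤ 1 / 2 → HasDerivAt (fun x => ell a A x - ell a A (1 - x)) _ y :=
    fun y h1 h2 => hasDerivAt_R (A := A) ha ⟨hc.trans_le h1, by linarith⟩
  obtain ⟨u, hu, hu'⟩ := exists_hasDerivAt_eq_slope (fun x => ell a A x - ell a A (1 - x)) _ hcz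
    (fun y hy => (hd y hy.1 (hy.2.trans hz.le)).continuousAt.continuousWithinAt)
    (fun y hy => hd y hy.1.le (hy.2.trans hz).le)
  obtain ⟨v, hv, hv'⟩ := exists_hasDerivAt_eq_slope (fun x => ell a A x - ell a A (1 - x)) _ hz
    (fun y hy => (hd y (hcz.le.trans hy.1) hy.2).continuousAt.continuousWithinAt)
    (fun y hy => hd y (hcz.trans hy.1).le hy.2.le)
  have hhalf : ell a A (1 / 2) - ell a A (1 - 1 / 2) = 0 := by norm_num
  have hu1 : 0 < (ell a A z - ell a A (1 - z) - (ell a A c - ell a A (1 - c))) / (z - c) :=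
    div_pos (by linarith) (by linarith)
  have hv1 : (ell a A (1 / 2) - ell a A (1 - 1 / 2) - (ell a A z - ell a A (1 - z))) /
      (1 / 2 - z) < 0 := div_neg_of_neg_of_pos (by linarith) (by linarith)
  rw [← hu'] at hu1
  rw [← hv'] at hv1
  have hu0 : 0 < u := hc.trans hu.1
  have huv : u < v := hu.2.trans hv.1
  have hu2 : 0 < u * (1 - u) := mul_pos hu0 (by linarith [hv.2])
  have hv2 : 0 < v * (1 - v) := mul_pos (hu0.trans huv) (by linarith [hv.2])
  rw [lt_div_iff₀ hu2, zero_mul] at hu1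
  rw [div_lt_iff₀ hv2, zero_mul] at hv1
  have hk := kfun_sum_anti ha hu0 huv hv.2
  have hAa : 0 < (A - 1) * a := mul_pos (by linarith) (by linarith)
  have := mul_le_mul_of_nonneg_left hk hAa.le
  linarith

lemma exp_ell {a A x : ℝ} (ha : 1 < a) (hx : x ∈ Ioo (0 : ℝ) 1) :
    exp (ell a A x) = x ^ (a - 1) * (1 - x ^ a) ^ (A - 1) := by
  rw [ell, exp_add, rpow_def_of_pos hx.1 (a - 1), rpow_def_of_pos (one_sub_rpow_pos ha hx) (A - 1),
    mul_comm (a - 1), mul_comm (A - 1)]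

lemma hasDerivAt_D {a A x : ℝ} (ha : 1 < a) (hx : x ∈ Ioo (0 : ℝ) 1) :
    HasDerivAt (D a A) (A * a * (exp (ell a A x) - exp (ell a A (1 - x)))) x := by
  have hx' : 1 - x ∈ Ioo (0 : ℝ) 1 := ⟨by linarith [hx.2], by linarith [hx.1]⟩
  have hg : ∀ y ∈ Ioo (0 : ℝ) 1,
      HasDerivAt (fun x : ℝ => (1 - x ^ a) ^ A) (-(A * a * exp (ell a A y))) y := by
    intro y hy
    have hr := Real.hasDerivAt_rpow_const (x := y) (p := a) (Or.inl hy.1.ne')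
    refine ((hr.const_sub 1).rpow_const (p := A)
      (Or.inl (one_sub_rpow_pos ha hy).ne')).congr_deriv ?_
    rw [exp_ell ha hy]; ring
  refine (((hg x hx).const_sub 1).sub
    ((hg _ hx').comp x ((hasDerivAt_id x).const_sub 1))).congr_deriv ?_
  ring

lemma D_half_nonneg {a A : ℝ} (ha : 1 < a) (hA : A = 2 ^ a * log 2) : 0 ≤ D a A (1 / 2) := by
  have hlog : 0 < log 2 := log_pos one_lt_two
  have hA0 : 0 ≤ A := by rw [hA]; positivity
  have hp := one_sub_rpow_pos ha (x := 1 / 2) ⟨by norm_num, by norm_num⟩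
  have h1 : 1 - (1 / 2 : ℝ) ^ a ≤ exp (-(1 / 2 : ℝ) ^ a) := by
    have := add_one_le_exp (-(1 / 2 : ℝ) ^ a)
    linarith
  have h2 : (1 - (1 / 2 : ℝ) ^ a) ^ A ≤ 1 / 2 := by
    refine (rpow_le_rpow hp.le h1 hA0).trans (le_of_eq ?_)
    rw [← exp_mul, hA]
    have : (1 / 2 : ℝ) ^ a * 2 ^ a = 1 := by
      rw [← mul_rpow (by norm_num) (by norm_num)]; norm_num
    rw [show -(1 / 2 : ℝ) ^ a * (2 ^ a * log 2) = -log 2 by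
      linear_combination (-log 2) * this, exp_neg, exp_log two_pos]
    norm_num
  rw [D, show (1 : ℝ) - 1 / 2 = 1 / 2 by norm_num]
  linarith

lemma D_nonneg {a A x : ℝ} (ha : 1 < a) (hA : A = 2 ^ a * log 2) (hA1 : 1 < A)
    (hx : x ∈ Icc (0 : ℝ) (1 / 2)) : 0 ≤ D a A x := by
  have hhalf := D_half_nonneg ha hA
  have hcont : Continuous (D a A) := by
    have ha0 : 0 ≤ a := by linarith
    have hA0 : 0 ≤ A := by linarith
    have h1 : Continuous fun x : ℝ => (1 - x ^ a) ^ A :=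
      (continuous_const.sub (continuous_id.rpow_const fun _ => Or.inr ha0)).rpow_const
        fun _ => Or.inr hA0
    exact (continuous_const.sub h1).sub (h1.comp (continuous_const.sub continuous_id))
  obtain ⟨c, hc, hmin⟩ := isCompact_Icc.exists_isMinOn ⟨x, hx⟩ hcont.continuousOn
  refine le_trans ?_ (hmin hx)
  rcases hc.1.eq_or_lt with h0 | h0
  · have ha0 : a ≠ 0 := by linarith
    have hA0 : A ≠ 0 := by linarith
    simp [← h0, D, ha0, hA0]
  rcases hc.2.eq_or_lt with h1 | h1
  · rwa [h1]
  have hAa : 0 < A * a := mul_pos (by linarith) (by linarith)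
  have hloc : IsLocalMin (D a A) c := hmin.isLocalMin (Icc_mem_nhds h0 h1)
  have hder := hloc.hasDerivAt_eq_zero (hasDerivAt_D ha ⟨h0, by linarith⟩)
  have hR : ell a A c - ell a A (1 - c) = 0 := by
    have := (mul_eq_zero.mp hder).resolve_left hAa.ne'
    exact sub_eq_zero.mpr (exp_injective (sub_eq_zero.mp this))
  have hanti : AntitoneOn (D a A) (Icc c (1 / 2)) := by
    apply antitoneOn_of_deriv_nonpos (convex_Icc _ _) hcont.continuousOn
    · intro y hy
      rw [interior_Icc] at hy
      exact (hasDerivAt_D ha ⟨h0.trans hy.1,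
        by linarith [hy.2]⟩).differentiableAt.differentiableWithinAt
    · intro y hy
      rw [interior_Icc] at hy
      rw [(hasDerivAt_D ha ⟨h0.trans hy.1, by linarith [hy.2]⟩).deriv]
      have := R_nonpos ha hA1 h0 hR hy.1 hy.2
      have := exp_le_exp.mpr (sub_nonpos.mp this)
      exact mul_nonpos_of_nonneg_of_nonpos hAa.le (by linarith)
  exact hhalf.trans (hanti ⟨le_rfl, h1.le⟩ ⟨h1.le, le_rfl⟩ h1.le)

end PowerIneq

/-- For `m > 0` and `M := 2^m + log₂(ln 2)`, one has
`1 − (1 − x^(2^m))^(2^M) ≥ (1 − (1 − x)^(2^m))^(2^M)` for all `x ∈ [0,1]`. -/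
theorem stmt_17 (m : ℝ) (hm : 0 < m) (M : ℝ)
    (hM : M = (2 : ℝ) ^ m + Real.logb 2 (Real.log 2)) :
    ∀ x ∈ Set.Icc (0 : ℝ) 1,
      1 - (1 - x ^ ((2 : ℝ) ^ m)) ^ ((2 : ℝ) ^ M)
        ≥ (1 - (1 - x) ^ ((2 : ℝ) ^ m)) ^ ((2 : ℝ) ^ M) := by
  intro x hx
  have ha : 1 < (2 : ℝ) ^ m := Real.one_lt_rpow one_lt_two hm
  have hlog : 0 < Real.log 2 := Real.log_pos one_lt_two
  have hA : (2 : ℝ) ^ M = 2 ^ ((2 : ℝ) ^ m) * Real.log 2 := by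
    rw [hM, Real.rpow_add two_pos, Real.rpow_logb two_pos (by norm_num) hlog]
  generalize (2 : ℝ) ^ m = a at ha hA ⊢
  generalize (2 : ℝ) ^ M = A at hA ⊢
  have hA1 : 1 < A := by
    have h2 : (2 : ℝ) ≤ 2 ^ a := by
      simpa using Real.rpow_le_rpow_of_exponent_le one_le_two ha.le
    have := Real.log_two_gt_d9
    rw [hA]
    nlinarith
  rcases le_total x (1 / 2) with h | h
  · have := PowerIneq.D_nonneg ha hA hA1 ⟨hx.1, h⟩
    rw [PowerIneq.D] at this
    linarith
  · have := PowerIneq.D_nonneg (x := 1 - x) ha hA hA1 ⟨by linarith [hx.2], by linarith⟩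
    rw [PowerIneq.D, sub_sub_cancel] at this
    linarith
end

section
/- Let m > n > 0 be real numbers, and let M := log₂( ln(2) / (−ln(1 − 2^(−2^m))) ) and N := log₂( ln(2) / (−ln(1 − 2^(−2^n))) ), so that (1 − 2^(−2^m))^(2^M) = 1/2 and (1 − 2^(−2^n))^(2^N) = 1/2. Then for every x ∈ [0,1], both of the following hold: (1 − (1 − x^(2^m))^(2^(M+n)))^(2^N) ≥ (1 − (1 − x^(2^n))^(2^(N+m)))^(2^M), and 1 − (1 − x^(2^(m−n)))^(2^(M+n)) ≥ (1 − (1 − x)^(2^(N+m)))^(2^(M−N)). -/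
/-!
Put `a = 2^m`, `b = 2^n`, `A = 2^M`, `B = 2^N`. The first inequality at `x` is the `B`-th power of the
second one at `x^b`, so only the second needs an argument. With `r = a/b`, `p = A b`, `q = B a`,
`s = A/B`, all larger than `1` and satisfying `p r = q s`, it reads
`F x := 1 - (1 - x^r)^p ≥ (1 - (1 - x)^q)^s =: G x`.

Here `F` and `G` agree to first order at `c = 2^(-b)`, and they agree at `0` and `1`.
Since `p r = q s`, the sign of `F' - G'` is the sign of
`D x = (r-1) ln x + (p-1) ln (1-x^r) - (q-1) ln (1-x) - (s-1) ln (1-(1-x)^q)`,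
and `x (1-x) D' x` is an affine function minus nonnegative multiples of `C_r(x)` and `C_q(1-x)`, where
`C_r(x) = (1-x)/(1-x^r)` is convex (`convexOn_quot`). So `x (1-x) D'` is concave.
Rolle's theorem gives zeros of `D` on both sides of the zero `c`, hence two zeros of `D'`; by
concavity `D` is decreasing, increasing, decreasing, so that `F - G` rises and then falls on each of
`[0,c]` and `[c,1]`, and is therefore nonnegative (`nonneg_of_concave`).
-/

/-! ### Convexity of `(1-x)/(1-x^r)` -/

/-- The second-derivative numerator of `(1-x)/(1-x^r)`, up to a positive factor, is nonnegative:
it vanishes at `1` and is antitone by weighted AM-GM. -/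
lemma second_num_nonneg {r x : ℝ} (hr : 1 < r) (hx0 : 0 < x) (hx1 : x < 1) :
    0 ≤ (r - 1) - (r + 1) * x + (r + 1) * x ^ r - (r - 1) * x ^ (r + 1) := by
  let E : ℝ → ℝ := fun y => (r - 1) - (r + 1) * y + (r + 1) * y ^ r - (r - 1) * y ^ (r + 1)
  have hE : ∀ y : ℝ, 0 < y → HasDerivAt E
      (-(r + 1) * (1 - r * y ^ (r - 1) + (r - 1) * y ^ r)) y := by
    intro y hy
    have h1 := Real.hasDerivAt_rpow_const (x := y) (p := r) (Or.inl hy.ne')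
    have h2 := Real.hasDerivAt_rpow_const (x := y) (p := r + 1) (Or.inl hy.ne')
    have h3 := (((((hasDerivAt_id y).const_mul (r + 1)).const_sub (r - 1)).add
      (h1.const_mul (r + 1))).sub (h2.const_mul (r - 1)))
    refine h3.congr_deriv ?_
    rw [show r + 1 - 1 = r by ring]
    ring
  have hanti : AntitoneOn E (Set.Ioc 0 1) := by
    refine antitoneOn_of_hasDerivWithinAt_nonpos (convex_Ioc 0 1)
      (fun y hy => (hE y hy.1).continuousAt.continuousWithinAt)
      (fun y hy => (hE y ?_).hasDerivWithinAt) ?_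
    · rw [interior_Ioc] at hy; exact hy.1
    · intro y hy
      rw [interior_Ioc] at hy
      have hy0 := hy.1
      have key := Real.geom_mean_le_arith_mean2_weighted (w₁ := 1 / r) (w₂ := (r - 1) / r)
        (p₁ := 1) (p₂ := y ^ r) (by positivity) (div_nonneg (by linarith) (by linarith))
        zero_le_one (by positivity) (by field_simp; ring)
      rw [Real.one_rpow, one_mul, ← Real.rpow_mul hy0.le,
        show r * ((r - 1) / r) = r - 1 by field_simp] at key
      have : r * y ^ (r - 1) ≤ 1 + (r - 1) * y ^ r := by
        calc r * y ^ (r - 1) ≤ r * (1 / r * 1 + (r - 1) / r * y ^ r) := by gcongr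
          _ = _ := by field_simp
      nlinarith
  have := hanti (a := x) (b := 1) ⟨hx0, hx1.le⟩ ⟨one_pos, le_rfl⟩ hx1.le
  have h1 : E 1 = 0 := by simp only [E, Real.one_rpow]; ring
  rw [h1] at this
  exact this

lemma convexOn_quot {r : ℝ} (hr : 1 < r) :
    ConvexOn ℝ (Set.Ioo 0 1) (fun x : ℝ => (1 - x) / (1 - x ^ r)) := by
  have hQ : ∀ x ∈ Set.Ioo (0 : ℝ) 1, 0 < 1 - x ^ r := fun x hx => by
    have := Real.rpow_lt_one hx.1.le hx.2 (by linarith : 0 < r)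
    linarith
  have hdQ : ∀ x ∈ Set.Ioo (0 : ℝ) 1,
      HasDerivAt (fun y : ℝ => 1 - y ^ r) (-(r * x ^ (r - 1))) x := fun x hx =>
    (Real.hasDerivAt_rpow_const (Or.inl hx.1.ne')).const_sub 1
  have hd1 : ∀ x ∈ Set.Ioo (0 : ℝ) 1, HasDerivAt (fun x : ℝ => (1 - x) / (1 - x ^ r))
      ((-1 * (1 - x ^ r) - (1 - x) * -(r * x ^ (r - 1))) / (1 - x ^ r) ^ 2) x := fun x hx =>
    ((hasDerivAt_id x).const_sub 1).div (hdQ x hx) (hQ x hx).ne'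
  have hd2 := fun x (hx : x ∈ Set.Ioo (0 : ℝ) 1) =>
    (((hdQ x hx).const_mul (-1)).sub (((hasDerivAt_id x).const_sub 1).mul
      ((Real.hasDerivAt_rpow_const (x := x) (p := r - 1)
        (Or.inl hx.1.ne')).const_mul r).neg)).div ((hdQ x hx).pow 2) (pow_pos (hQ x hx) 2).ne'
  refine convexOn_of_hasDerivWithinAt2_nonneg (convex_Ioo 0 1)
    (fun x hx => (hd1 x hx).continuousAt.continuousWithinAt)
    (fun x hx => (hd1 x (interior_subset hx)).hasDerivWithinAt)
    (fun x hx => (hd2 x (interior_subset hx)).hasDerivWithinAt) ?_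
  intro x hx
  have hx := interior_subset hx
  have hE := second_num_nonneg hr hx.1 hx.2
  have hq := hQ x hx
  have e1 : x ^ (r - 1) = x ^ (r - 2) * x := by
    rw [← Real.rpow_add_one hx.1.ne']; congr 1; ring
  have e2 : x ^ r = x ^ (r - 2) * x * x := by
    rw [← e1, ← Real.rpow_add_one hx.1.ne']; congr 1; ring
  have e3 : x ^ (r + 1) = x ^ (r - 2) * x * x * x := by
    rw [← e2, ← Real.rpow_add_one hx.1.ne']
  have e4 : x ^ (r - 1 - 1) = x ^ (r - 2) := by congr 1; ring
  have hz : 0 < x ^ (r - 2) := Real.rpow_pos_of_pos hx.1 _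
  simp only [id, Pi.pow_apply, Pi.sub_apply, Pi.mul_apply, Pi.neg_apply]
  rw [e3] at hE
  rw [e4, e1]
  rw [e2] at hE hq ⊢
  generalize x ^ (r - 2) = z at *
  apply div_nonneg _ (by positivity)
  have : 0 ≤ (1 - z * x * x) * (r * z *
      (r - 1 - (r + 1) * x + (r + 1) * (z * x * x) - (r - 1) * (z * x * x * x))) := by
    have : 0 < r * z := by positivity
    positivity
  refine this.trans_eq ?_
  push_cast
  ring

/-! ### Sign pattern from concavity -/

lemma concave_left {K : ℝ → ℝ} (hK : ConcaveOn ℝ (Set.Ioo 0 1) K) {u v t : ℝ}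
    (hv1 : v < 1) (huv : u < v) (hu : K u = 0) (hv : K v = 0)
    (ht0 : 0 < t) (ht : t < u) : K t ≤ 0 := by
  have := hK.slope_anti_adjacent (x := t) (y := u) (z := v) ⟨ht0, by linarith⟩
    ⟨by linarith, hv1⟩ ht huv
  rw [hu, hv, sub_self, zero_div, zero_sub] at this
  have h2 : 0 < u - t := by linarith
  have := (le_div_iff₀ h2).1 this
  linarith

lemma concave_mid {K : ℝ → ℝ} (hK : ConcaveOn ℝ (Set.Ioo 0 1) K) {u v t : ℝ}
    (hu0 : 0 < u) (hv1 : v < 1) (hu : K u = 0) (hv : K v = 0)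
    (hut : u < t) (htv : t < v) : 0 ≤ K t := by
  have := hK.slope_anti_adjacent (x := u) (y := t) (z := v) ⟨hu0, by linarith⟩
    ⟨by linarith, hv1⟩ hut htv
  rw [hu, hv, div_le_div_iff₀ (by linarith) (by linarith)] at this
  nlinarith

lemma concave_right {K : ℝ → ℝ} (hK : ConcaveOn ℝ (Set.Ioo 0 1) K) {u v t : ℝ}
    (hu0 : 0 < u) (huv : u < v) (hu : K u = 0) (hv : K v = 0)
    (ht : v < t) (ht1 : t < 1) : K t ≤ 0 := by
  have := hK.slope_anti_adjacent (x := u) (y := v) (z := t) ⟨hu0, by linarith⟩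
    ⟨by linarith, ht1⟩ huv ht
  rw [hu, hv, sub_self, zero_div, sub_zero] at this
  have h2 : 0 < t - v := by linarith
  have := (div_le_iff₀ h2).1 this
  linarith

/-- `H` vanishes at `0 < c < 1`, the sign of its derivative is that of `D`, which also vanishes
at `c`, and the sign of the derivative of `D` is that of a concave function `K`. Then `H ≥ 0`. -/
lemma nonneg_of_concave {H H' D D' K w : ℝ → ℝ} {c : ℝ} (hc0 : 0 < c) (hc1 : c < 1)
    (hcont : Continuous H) (H0 : H 0 = 0) (Hc : H c = 0) (H1 : H 1 = 0)
    (hH : ∀ x ∈ Set.Ioo (0 : ℝ) 1, HasDerivAt H (H' x) x)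
    (hpos : ∀ x ∈ Set.Ioo (0 : ℝ) 1, 0 ≤ D x → 0 ≤ H' x)
    (hneg : ∀ x ∈ Set.Ioo (0 : ℝ) 1, D x ≤ 0 → H' x ≤ 0)
    (hzero : ∀ x ∈ Set.Ioo (0 : ℝ) 1, H' x = 0 → D x = 0)
    (Dc : D c = 0)
    (hD : ∀ x ∈ Set.Ioo (0 : ℝ) 1, HasDerivAt D (D' x) x)
    (hw : ∀ x ∈ Set.Ioo (0 : ℝ) 1, 0 < w x)
    (hK : ∀ x ∈ Set.Ioo (0 : ℝ) 1, D' x * w x = K x)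
    (hKc : ConcaveOn ℝ (Set.Ioo 0 1) K) :
    ∀ x ∈ Set.Icc (0 : ℝ) 1, 0 ≤ H x := by
  obtain ⟨z₁, hz₁, hz₁'⟩ := exists_hasDerivAt_eq_zero hc0 hcont.continuousOn (H0.trans Hc.symm)
    (fun x hx => hH x ⟨hx.1, hx.2.trans hc1⟩)
  obtain ⟨z₂, hz₂, hz₂'⟩ := exists_hasDerivAt_eq_zero hc1 hcont.continuousOn (Hc.trans H1.symm)
    (fun x hx => hH x ⟨hc0.trans hx.1, hx.2⟩)
  have hz10 := hz₁.1
  have hz1c := hz₁.2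
  have hz2c := hz₂.1
  have hz21 := hz₂.2
  have Dz₁ := hzero z₁ ⟨hz10, by linarith⟩ hz₁'
  have Dz₂ := hzero z₂ ⟨by linarith, hz21⟩ hz₂'
  have Dcont : ∀ x ∈ Set.Ioo (0 : ℝ) 1, ContinuousAt D x := fun x hx => (hD x hx).continuousAt
  obtain ⟨w₁, hw₁, hw₁'⟩ := exists_hasDerivAt_eq_zero (f := D) (f' := D') hz1c
    (fun x hx => (Dcont x ⟨by linarith [hx.1], by linarith [hx.2]⟩).continuousWithinAt)
    (Dz₁.trans Dc.symm) (fun x hx => hD x ⟨by linarith [hx.1], by linarith [hx.2]⟩)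
  obtain ⟨w₂, hw₂, hw₂'⟩ := exists_hasDerivAt_eq_zero (f := D) (f' := D') hz2c
    (fun x hx => (Dcont x ⟨by linarith [hx.1], by linarith [hx.2]⟩).continuousWithinAt)
    (Dc.trans Dz₂.symm) (fun x hx => hD x ⟨by linarith [hx.1], by linarith [hx.2]⟩)
  have hw1z := hw₁.1
  have hw1c := hw₁.2
  have hw2c := hw₂.1
  have hw2z := hw₂.2
  have Kw₁ : K w₁ = 0 := by rw [← hK w₁ ⟨by linarith, by linarith⟩, hw₁', zero_mul]
  have Kw₂ : K w₂ = 0 := by rw [← hK w₂ ⟨by linarith, by linarith⟩, hw₂', zero_mul]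
  have sgn_neg : ∀ x ∈ Set.Ioo (0 : ℝ) 1, K x ≤ 0 → D' x ≤ 0 := fun x hx h => by
    rw [← hK x hx] at h
    by_contra! h'
    exact absurd (mul_pos h' (hw x hx)) (not_lt.2 h)
  have sgn_pos : ∀ x ∈ Set.Ioo (0 : ℝ) 1, 0 ≤ K x → 0 ≤ D' x := fun x hx h => by
    rw [← hK x hx] at h
    exact nonneg_of_mul_nonneg_left h (hw x hx)
  have Danti₁ : AntitoneOn D (Set.Ioc 0 w₁) := by
    refine antitoneOn_of_hasDerivWithinAt_nonpos (f' := D') (convex_Ioc 0 w₁)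
      (fun x hx => (Dcont x ⟨hx.1, by linarith [hx.2]⟩).continuousWithinAt) ?_ ?_ <;>
      rw [interior_Ioc] <;> intro x hx
    · exact (hD x ⟨hx.1, by linarith [hx.2]⟩).hasDerivWithinAt
    · exact sgn_neg x ⟨hx.1, by linarith [hx.2]⟩
        (concave_left hKc (by linarith) (by linarith) Kw₁ Kw₂ hx.1 hx.2)
  have Dmono : MonotoneOn D (Set.Icc w₁ w₂) := by
    refine monotoneOn_of_hasDerivWithinAt_nonneg (f' := D') (convex_Icc w₁ w₂)
      (fun x hx => (Dcont x ⟨by linarith [hx.1], by linarith [hx.2]⟩).continuousWithinAt) ?_ ?_ <;>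
      rw [interior_Icc] <;> intro x hx
    · exact (hD x ⟨by linarith [hx.1], by linarith [hx.2]⟩).hasDerivWithinAt
    · exact sgn_pos x ⟨by linarith [hx.1], by linarith [hx.2]⟩
        (concave_mid hKc (by linarith) (by linarith) Kw₁ Kw₂ hx.1 hx.2)
  have Danti₂ : AntitoneOn D (Set.Ico w₂ 1) := by
    refine antitoneOn_of_hasDerivWithinAt_nonpos (f' := D') (convex_Ico w₂ 1)
      (fun x hx => (Dcont x ⟨by linarith [hx.1], hx.2⟩).continuousWithinAt) ?_ ?_ <;>
      rw [interior_Ico] <;> intro x hx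
    · exact (hD x ⟨by linarith [hx.1], hx.2⟩).hasDerivWithinAt
    · exact sgn_neg x ⟨by linarith [hx.1], hx.2⟩
        (concave_right hKc (by linarith) (by linarith) Kw₁ Kw₂ hx.1 hx.2)
  have Hmono : ∀ u v : ℝ, 0 ≤ u → v ≤ 1 → (∀ x ∈ Set.Ioo u v, 0 ≤ D x) →
      MonotoneOn H (Set.Icc u v) := fun u v hu hv h => by
    refine monotoneOn_of_hasDerivWithinAt_nonneg (f' := H') (convex_Icc u v)
      hcont.continuousOn ?_ ?_ <;> rw [interior_Icc] <;> intro x hx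
    · exact (hH x ⟨by linarith [hx.1], by linarith [hx.2]⟩).hasDerivWithinAt
    · exact hpos x ⟨by linarith [hx.1], by linarith [hx.2]⟩ (h x hx)
  have Hanti : ∀ u v : ℝ, 0 ≤ u → v ≤ 1 → (∀ x ∈ Set.Ioo u v, D x ≤ 0) →
      AntitoneOn H (Set.Icc u v) := fun u v hu hv h => by
    refine antitoneOn_of_hasDerivWithinAt_nonpos (f' := H') (convex_Icc u v)
      hcont.continuousOn ?_ ?_ <;> rw [interior_Icc] <;> intro x hx
    · exact (hH x ⟨by linarith [hx.1], by linarith [hx.2]⟩).hasDerivWithinAt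
    · exact hneg x ⟨by linarith [hx.1], by linarith [hx.2]⟩ (h x hx)
  intro x hx
  have hx0 := hx.1
  have hx1 := hx.2
  rcases le_total x z₁ with h | h
  · rw [← H0]
    refine Hmono 0 z₁ le_rfl (by linarith) (fun y hy => ?_) ⟨le_rfl, by linarith⟩ ⟨hx0, h⟩ hx0
    rw [← Dz₁]
    exact Danti₁ ⟨hy.1, by linarith [hy.2]⟩ ⟨hz10, by linarith⟩ hy.2.le
  rcases le_total x c with h' | h'
  · rw [← Hc]
    refine Hanti z₁ c (by linarith) (by linarith) (fun y hy => ?_) ⟨h, h'⟩ ⟨hz1c.le, le_rfl⟩ h'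
    rcases le_total y w₁ with hy' | hy'
    · rw [← Dz₁]
      exact Danti₁ ⟨hz10, by linarith⟩ ⟨by linarith [hy.1], hy'⟩ hy.1.le
    · rw [← Dc]
      exact Dmono ⟨hy', by linarith [hy.2]⟩ ⟨hw1c.le, hw2c.le⟩ hy.2.le
  rcases le_total x z₂ with h'' | h''
  · rw [← Hc]
    refine Hmono c z₂ (by linarith) (by linarith) (fun y hy => ?_) ⟨le_rfl, hz2c.le⟩ ⟨h', h''⟩ h'
    rcases le_total y w₂ with hy' | hy'
    · rw [← Dc]
      exact Dmono ⟨hw1c.le, hw2c.le⟩ ⟨by linarith [hy.1], hy'⟩ hy.1.le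
    · rw [← Dz₂]
      exact Danti₂ ⟨hy', by linarith [hy.2]⟩ ⟨hw2z.le, hz21⟩ hy.2.le
  · rw [← H1]
    refine Hanti z₂ 1 (by linarith) le_rfl (fun y hy => ?_) ⟨h'', hx1⟩ ⟨hz21.le, le_rfl⟩ hx1
    rw [← Dz₂]
    exact Danti₂ ⟨hw2z.le, hz21⟩ ⟨by linarith [hy.1], hy.2⟩ hy.1.le

/-! ### The comparison for general exponents -/

/-- The comparison of `1 - (1-x^r)^p` with `(1-(1-x)^q)^s`, given that they agree to first order
at one interior point `c`; `hD` is the logarithmic form of the equality of derivatives. -/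
lemma core_ineq {p q r s c : ℝ} (hp : 1 < p) (hq : 1 < q) (hr : 1 < r) (hs : 1 < s)
    (hprod : p * r = q * s) (hc0 : 0 < c) (hc1 : c < 1)
    (hc : 1 - (1 - c ^ r) ^ p = (1 - (1 - c) ^ q) ^ s)
    (hD : (r - 1) * Real.log c + (p - 1) * Real.log (1 - c ^ r)
      - (q - 1) * Real.log (1 - c) - (s - 1) * Real.log (1 - (1 - c) ^ q) = 0) :
    ∀ x ∈ Set.Icc (0 : ℝ) 1, (1 - (1 - x) ^ q) ^ s ≤ 1 - (1 - x ^ r) ^ p := by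
  have hQr : ∀ x ∈ Set.Ioo (0 : ℝ) 1, 0 < 1 - x ^ r := fun x hx => by
    have := Real.rpow_lt_one hx.1.le hx.2 (by linarith : 0 < r)
    linarith
  have hQq : ∀ x ∈ Set.Ioo (0 : ℝ) 1, 0 < 1 - (1 - x) ^ q := fun x hx => by
    have := Real.rpow_lt_one (sub_nonneg.2 hx.2.le) (by linarith [hx.1] : 1 - x < 1)
      (by linarith : 0 < q)
    linarith
  have hdr : ∀ x ∈ Set.Ioo (0 : ℝ) 1,
      HasDerivAt (fun y : ℝ => 1 - y ^ r) (-(r * x ^ (r - 1))) x := fun x hx =>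
    (Real.hasDerivAt_rpow_const (Or.inl hx.1.ne')).const_sub 1
  have hdq : ∀ x ∈ Set.Ioo (0 : ℝ) 1,
      HasDerivAt (fun y : ℝ => 1 - (1 - y) ^ q) (q * (1 - x) ^ (q - 1)) x := fun x hx => by
    have h := (((hasDerivAt_id x).const_sub 1).rpow_const (p := q)
      (Or.inl (sub_pos.2 hx.2).ne')).const_sub 1
    refine h.congr_deriv ?_
    simp only [id]
    ring
  let D : ℝ → ℝ := fun x => (r - 1) * Real.log x + (p - 1) * Real.log (1 - x ^ r)
      - (q - 1) * Real.log (1 - x) - (s - 1) * Real.log (1 - (1 - x) ^ q)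
  let X : ℝ → ℝ := fun x => (1 - x ^ r) ^ (p - 1) * x ^ (r - 1)
  let Y : ℝ → ℝ := fun x => (1 - (1 - x) ^ q) ^ (s - 1) * (1 - x) ^ (q - 1)
  have hX : ∀ x ∈ Set.Ioo (0 : ℝ) 1, 0 < X x := fun x hx =>
    mul_pos (Real.rpow_pos_of_pos (hQr x hx) _) (Real.rpow_pos_of_pos hx.1 _)
  have hY : ∀ x ∈ Set.Ioo (0 : ℝ) 1, 0 < Y x := fun x hx =>
    mul_pos (Real.rpow_pos_of_pos (hQq x hx) _) (Real.rpow_pos_of_pos (sub_pos.2 hx.2) _)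
  have hDXY : ∀ x ∈ Set.Ioo (0 : ℝ) 1, D x = Real.log (X x) - Real.log (Y x) := fun x hx => by
    have h1x : 0 < 1 - x := sub_pos.2 hx.2
    simp only [D, X, Y]
    rw [Real.log_mul (Real.rpow_pos_of_pos (hQr x hx) _).ne' (Real.rpow_pos_of_pos hx.1 _).ne',
      Real.log_mul (Real.rpow_pos_of_pos (hQq x hx) _).ne' (Real.rpow_pos_of_pos h1x _).ne',
      Real.log_rpow (hQr x hx), Real.log_rpow hx.1, Real.log_rpow (hQq x hx), Real.log_rpow h1x]
    ring
  have hpr : 0 < p * r := by nlinarith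
  have hmain := nonneg_of_concave
    (H := fun x => 1 - (1 - x ^ r) ^ p - (1 - (1 - x) ^ q) ^ s)
    (H' := fun x => p * r * (X x - Y x)) (D := D)
    (D' := fun x => (r - 1) * x⁻¹ + (p - 1) * (-(r * x ^ (r - 1)) / (1 - x ^ r))
      - (q - 1) * (-1 / (1 - x)) - (s - 1) * (q * (1 - x) ^ (q - 1) / (1 - (1 - x) ^ q)))
    (K := fun x => (r - 1 + r * (p - 1)) * (1 - x) + (q - 1 + q * (s - 1)) * x
      - r * (p - 1) * ((1 - x) / (1 - x ^ r))
      - q * (s - 1) * ((1 - (1 - x)) / (1 - (1 - x) ^ q)))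
    (w := fun x => x * (1 - x)) hc0 hc1 ?_ ?_ ?_ ?_ ?_ ?_ ?_ ?_ hD ?_ ?_ ?_ ?_
  · intro x hx
    exact sub_nonneg.1 (hmain x hx)
  · have h1 : Continuous fun x : ℝ => x ^ r :=
      continuous_id.rpow_const fun _ => Or.inr (by linarith)
    have h2 : Continuous fun x : ℝ => (1 - x ^ r) ^ p :=
      (continuous_const.sub h1).rpow_const fun _ => Or.inr (by linarith)
    have h3 : Continuous fun x : ℝ => (1 - x) ^ q :=
      (continuous_const.sub continuous_id).rpow_const fun _ => Or.inr (by linarith)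
    have h4 : Continuous fun x : ℝ => (1 - (1 - x) ^ q) ^ s :=
      (continuous_const.sub h3).rpow_const fun _ => Or.inr (by linarith)
    exact (continuous_const.sub h2).sub h4
  · simp [Real.zero_rpow (by linarith : r ≠ 0), Real.zero_rpow (by linarith : s ≠ 0)]
  · simp [hc]
  · simp [Real.zero_rpow (by linarith : p ≠ 0), Real.zero_rpow (by linarith : q ≠ 0)]
  · intro x hx
    have h1 := ((hdr x hx).rpow_const (p := p) (Or.inl (hQr x hx).ne')).const_sub 1
    have h2 := (hdq x hx).rpow_const (p := s) (Or.inl (hQq x hx).ne')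
    refine (h1.sub h2).congr_deriv ?_
    simp only [X, Y]
    linear_combination (1 - (1 - x) ^ q) ^ (s - 1) * (1 - x) ^ (q - 1) * hprod
  · intro x hx h
    rw [hDXY x hx, sub_nonneg, Real.log_le_log_iff (hY x hx) (hX x hx)] at h
    exact mul_nonneg hpr.le (sub_nonneg.2 h)
  · intro x hx h
    rw [hDXY x hx, sub_nonpos, Real.log_le_log_iff (hX x hx) (hY x hx)] at h
    exact mul_nonpos_of_nonneg_of_nonpos hpr.le (sub_nonpos.2 h)
  · intro x hx h
    have h' : X x = Y x := sub_eq_zero.1 ((mul_eq_zero.1 h).resolve_left hpr.ne')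
    rw [hDXY x hx, h', sub_self]
  · intro x hx
    exact (((((Real.hasDerivAt_log hx.1.ne').const_mul (r - 1)).add
      (((hdr x hx).log (hQr x hx).ne').const_mul (p - 1))).sub
      ((((hasDerivAt_id x).const_sub 1).log (sub_pos.2 hx.2).ne').const_mul (q - 1))).sub
      (((hdq x hx).log (hQq x hx).ne').const_mul (s - 1)))
  · intro x hx
    exact mul_pos hx.1 (sub_pos.2 hx.2)
  · intro x hx
    have h1x : 0 < 1 - x := sub_pos.2 hx.2
    have hx0 := hx.1
    have a1 := hQr x hx
    have a2 := hQq x hx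
    have e1 : x ^ r = x ^ (r - 1) * x := by
      rw [← Real.rpow_add_one hx0.ne']; congr 1; ring
    have e2 : (1 - x) ^ q = (1 - x) ^ (q - 1) * (1 - x) := by
      rw [← Real.rpow_add_one h1x.ne']; congr 1; ring
    rw [e1] at a1 ⊢
    rw [e2] at a2 ⊢
    generalize x ^ (r - 1) = z at *
    generalize (1 - x) ^ (q - 1) = y at *
    have b1 := mul_inv_cancel₀ a1.ne'
    have b2 := mul_inv_cancel₀ a2.ne'
    have b3 := mul_inv_cancel₀ h1x.ne'
    have b4 := mul_inv_cancel₀ hx0.ne'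
    simp only [div_eq_mul_inv]
    linear_combination r * (p - 1) * (1 - x) * b1 + q * (s - 1) * x * b2
      + (q - 1) * x * b3 + (r - 1) * (1 - x) * b4
  · have c1 := convexOn_quot hr
    have c2 : ConvexOn ℝ (Set.Ioo 0 1) (fun x : ℝ => (1 - (1 - x)) / (1 - (1 - x) ^ q)) := by
      refine ⟨convex_Ioo 0 1, fun x hx y hy a b ha hb hab => ?_⟩
      have := (convexOn_quot hq).2 (x := 1 - x) (y := 1 - y) ⟨by linarith [hx.2], by linarith [hx.1]⟩
        ⟨by linarith [hy.2], by linarith [hy.1]⟩ ha hb hab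
      have e : a • (1 - x) + b • (1 - y) = 1 - (a • x + b • y) := by
        simp only [smul_eq_mul]; linear_combination hab
      rw [e] at this
      exact this
    have hrp : 0 ≤ r * (p - 1) := mul_nonneg (by linarith) (by linarith)
    have hqs : 0 ≤ q * (s - 1) := mul_nonneg (by linarith) (by linarith)
    have hlin : ConcaveOn ℝ (Set.Ioo 0 1) (fun x : ℝ =>
        (r - 1 + r * (p - 1)) * (1 - x) + (q - 1 + q * (s - 1)) * x) := by
      refine ⟨convex_Ioo 0 1, fun x hx y hy a b ha hb hab => le_of_eq ?_⟩
      simp only [smul_eq_mul]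
      linear_combination (r - 1 + r * (p - 1)) * hab
    exact (hlin.sub (c1.smul hrp)).sub (c2.smul hqs)

/-! ### The exponents `M` and `N` -/

/-- The exponent `A = 2^M` attached to `a = 2^m` satisfies `A ln (1 - 2^(-a)) = -ln 2`, the
logarithmic form of `(1 - 2^(-a))^A = 1/2`; it exceeds `1` because `2^(-a) < 1/2`. -/
lemma exponent_facts {m M : ℝ} (hm : 0 < m)
    (hM : M = Real.logb 2 (Real.log 2 / (-Real.log (1 - (2 : ℝ) ^ (-(2 : ℝ) ^ m))))) :
    (2 : ℝ) ^ M * Real.log (1 - (2 : ℝ) ^ (-(2 : ℝ) ^ m)) = -Real.log 2 ∧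
    1 < (2 : ℝ) ^ M ∧ 0 < 1 - (2 : ℝ) ^ (-(2 : ℝ) ^ m) ∧ 1 < (2 : ℝ) ^ m := by
  have ha : 1 < (2 : ℝ) ^ m := Real.one_lt_rpow one_lt_two hm
  have h1 : (2 : ℝ) ^ (-(2 : ℝ) ^ m) < 1 / 2 := by
    calc (2 : ℝ) ^ (-(2 : ℝ) ^ m) < (2 : ℝ) ^ (-1 : ℝ) :=
          Real.rpow_lt_rpow_of_exponent_lt one_lt_two (by linarith)
      _ = 1 / 2 := by rw [Real.rpow_neg_one]; norm_num
  have h0 : 0 < (2 : ℝ) ^ (-(2 : ℝ) ^ m) := by positivity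
  have hl : Real.log (1 - (2 : ℝ) ^ (-(2 : ℝ) ^ m)) < 0 :=
    Real.log_neg (by linarith) (by linarith)
  have hl2 : -Real.log 2 < Real.log (1 - (2 : ℝ) ^ (-(2 : ℝ) ^ m)) := by
    rw [← Real.log_inv]
    exact Real.log_lt_log (by norm_num) (by linarith)
  have hL : 0 < Real.log 2 := Real.log_pos one_lt_two
  have hA : (2 : ℝ) ^ M = Real.log 2 / (-Real.log (1 - (2 : ℝ) ^ (-(2 : ℝ) ^ m))) := by
    rw [hM, Real.rpow_logb two_pos (by norm_num) (div_pos hL (by linarith))]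
  refine ⟨?_, ?_, by linarith, ha⟩
  · rw [hA]
    field_simp [hl.ne]
  · rw [hA, one_lt_div (by linarith)]
    linarith

/-- Used with `t = 1 - 2^(-a)` and `A` the exponent for which `t^A = 1/2`. -/
lemma pow_of_log {t A k : ℝ} (ht : 0 < t) (h : A * Real.log t = -Real.log 2) :
    t ^ (A * k) = (2 : ℝ) ^ (-k) := by
  rw [Real.rpow_def_of_pos ht, Real.rpow_def_of_pos two_pos]
  congr 1
  linear_combination k * h

/-- Lightning corollary: for `m > n > 0`, with `M` and `N` defined so that
`(1 − 2^(−2^m))^(2^M) = 1/2` and `(1 − 2^(−2^n))^(2^N) = 1/2`, one has both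
`0^m 1^M 1^n 0^N ≽ 0^n 1^N 1^m 0^M` and `0^(m−n) 1^(M+n) ≽ 1^(N+m) 0^(M−N)`. -/
theorem stmt_18 (m n : ℝ) (hn : 0 < n) (hnm : n < m) (M N : ℝ)
    (hM : M = Real.logb 2 (Real.log 2 / (-Real.log (1 - (2 : ℝ) ^ (-(2 : ℝ) ^ m)))))
    (hN : N = Real.logb 2 (Real.log 2 / (-Real.log (1 - (2 : ℝ) ^ (-(2 : ℝ) ^ n))))) :
    (1 - (2 : ℝ) ^ (-(2 : ℝ) ^ m)) ^ ((2 : ℝ) ^ M) = 1 / 2 ∧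
    (1 - (2 : ℝ) ^ (-(2 : ℝ) ^ n)) ^ ((2 : ℝ) ^ N) = 1 / 2 ∧
    ∀ x ∈ Set.Icc (0 : ℝ) 1,
      (1 - (1 - x ^ ((2 : ℝ) ^ m)) ^ ((2 : ℝ) ^ (M + n))) ^ ((2 : ℝ) ^ N)
        ≥ (1 - (1 - x ^ ((2 : ℝ) ^ n)) ^ ((2 : ℝ) ^ (N + m))) ^ ((2 : ℝ) ^ M) ∧
      1 - (1 - x ^ ((2 : ℝ) ^ (m - n))) ^ ((2 : ℝ) ^ (M + n))
        ≥ (1 - (1 - x) ^ ((2 : ℝ) ^ (N + m))) ^ ((2 : ℝ) ^ (M - N)) := by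
  obtain ⟨hA, hA1, htm, ha⟩ := exponent_facts (hn.trans hnm) hM
  obtain ⟨hB, hB1, htn, hb⟩ := exponent_facts hn hN
  have hab : (2 : ℝ) ^ n < (2 : ℝ) ^ m := Real.rpow_lt_rpow_of_exponent_lt one_lt_two hnm
  have half : ∀ t A : ℝ, 0 < t → A * Real.log t = -Real.log 2 → t ^ A = 1 / 2 := by
    intro t A ht h
    have := pow_of_log (k := 1) ht h
    rw [mul_one, Real.rpow_neg_one] at this
    rw [this, one_div]
  refine ⟨half _ _ htm hA, half _ _ htn hB, ?_⟩
  have hBA : (2 : ℝ) ^ N < (2 : ℝ) ^ M := by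
    have hlt : (2 : ℝ) ^ (-(2 : ℝ) ^ m) < (2 : ℝ) ^ (-(2 : ℝ) ^ n) :=
      Real.rpow_lt_rpow_of_exponent_lt one_lt_two (by linarith)
    have hlog := Real.log_lt_log htn (by linarith :
      1 - (2 : ℝ) ^ (-(2 : ℝ) ^ n) < 1 - (2 : ℝ) ^ (-(2 : ℝ) ^ m))
    have hL : 0 < Real.log 2 := Real.log_pos one_lt_two
    by_contra! hcon
    have hneg : Real.log (1 - (2 : ℝ) ^ (-(2 : ℝ) ^ m)) < 0 := by
      by_contra! h
      nlinarith
    have g1 := mul_le_mul_of_nonpos_right hcon hneg.le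
    have g2 := mul_lt_mul_of_pos_left hlog (by linarith : 0 < (2 : ℝ) ^ N)
    linarith
  rw [Real.rpow_add two_pos, Real.rpow_add two_pos, Real.rpow_sub two_pos, Real.rpow_sub two_pos]
  clear hM hN half
  generalize (2 : ℝ) ^ M = A at *
  generalize (2 : ℝ) ^ N = B at *
  generalize (2 : ℝ) ^ m = a at *
  generalize (2 : ℝ) ^ n = b at *
  have hA0 : A ≠ 0 := by linarith
  have hB0 : 0 < B := by linarith
  have hb0 : 0 < b := by linarith
  have e1 : ((2 : ℝ) ^ (-b)) ^ (a / b) = (2 : ℝ) ^ (-a) := by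
    rw [← Real.rpow_mul two_pos.le]
    congr 1
    field_simp
  have e2 : (1 - (2 : ℝ) ^ (-a)) ^ (A * b) = (2 : ℝ) ^ (-b) := pow_of_log htm hA
  have e3 : (1 - (2 : ℝ) ^ (-b)) ^ (B * a) = (2 : ℝ) ^ (-a) := pow_of_log htn hB
  have e4 : (1 - (2 : ℝ) ^ (-a)) ^ (A / B) = 1 - (2 : ℝ) ^ (-b) := by
    rw [div_eq_mul_inv, pow_of_log htm hA, ← pow_of_log htn hB, mul_inv_cancel₀ hB0.ne',
      Real.rpow_one]
  have second : ∀ x ∈ Set.Icc (0 : ℝ) 1,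
      (1 - (1 - x) ^ (B * a)) ^ (A / B) ≤ 1 - (1 - x ^ (a / b)) ^ (A * b) := by
    refine core_ineq (c := (2 : ℝ) ^ (-b)) (by nlinarith) (by nlinarith)
      ((one_lt_div hb0).2 hab) ((one_lt_div hB0).2 hBA) (by field_simp) (by positivity)
      (by linarith) ?_ ?_
    · rw [e1, e2, e3, e4]
    · rw [e1, e3, Real.log_rpow two_pos]
      have l1 : Real.log (1 - (2 : ℝ) ^ (-a)) = -Real.log 2 / A := by
        rw [eq_div_iff hA0, mul_comm]; exact hA
      have l2 : Real.log (1 - (2 : ℝ) ^ (-b)) = -Real.log 2 / B := by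
        rw [eq_div_iff hB0.ne', mul_comm]; exact hB
      rw [l1, l2]
      field_simp
      ring
  intro x hx
  refine ⟨?_, second x hx⟩
  have hy : x ^ b ∈ Set.Icc (0 : ℝ) 1 :=
    ⟨Real.rpow_nonneg hx.1 _, Real.rpow_le_one hx.1 hx.2 hb0.le⟩
  have h := second (x ^ b) hy
  have h0 : 0 ≤ 1 - (1 - x ^ b) ^ (B * a) :=
    sub_nonneg.2 (Real.rpow_le_one (sub_nonneg.2 hy.2) (by linarith [hy.1])
      (mul_nonneg hB0.le (by linarith)))
  have h' := Real.rpow_le_rpow (Real.rpow_nonneg h0 _) h hB0.le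
  rw [← Real.rpow_mul h0, div_mul_cancel₀ _ hB0.ne', ← Real.rpow_mul hx.1,
    mul_div_cancel₀ _ hb0.ne'] at h'
  exact h'
end

section
/- Let n > 1 be an integer, let a₁, …, aₙ ∈ {0,1}, and set bⱼ := 1 − aⱼ for each j. Suppose that for every m with 1 ≤ m ≤ n−1 one has I_{a₁⋯a_m}(1/2) ≤ 1/2, and that I_{a₁⋯aₙ}(1/2) ≥ 1/2. Then for every x ∈ [0,1], I_{a₁⋯aₙ}(x) ≥ I_{b₁⋯bₙ}(x). -/
/-!
Complementing every bit conjugates `I` by `x ↦ 1 - x`, so the claim is `I_a(x) + I_a(1 - x) ≥ 1`.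
Fix `x < 1/2` and follow `u = I(x)`, `v = I(1 - x)`, `z = I(1/2)` along the prefixes of `a`. The
invariant (`PowInv`) is `u ^ s + v ^ s ≥ 1`, where the exponent `s` is defined by `z ^ s = 1/2`.
It holds at the start (`s = 1`), and squaring preserves it since `s` is halved. When `z` reaches
`1/2` we have `s = 1`, and the invariant is the claim.

For the map `x ↦ 1 - (1 - x)²`, interpolate by the flow `x ↦ 1 - (1 - x) ^ d`, `d ≥ 1`, and show
that `u ^ s + v ^ s` has positive derivative in `d` wherever it equals `1`, as long as `z < 1/2`
(`flow`). With `u = exp (-c a)`, `v = exp (-c b)`, `c = 1 / s > 1`, this derivative is a positive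
multiple of
  `exp (-a) a (Θ (c a) - Θ (c log 2)) + exp (-b) b (Θ (c b) - Θ (c log 2))`,
where `Θ t = -(exp t - 1) log (1 - exp (-t)) / t` and `exp (-a) + exp (-b) = 1`.
At `c = 1` the expression vanishes identically, because the two flows are
then mirror images of each other. For `c > 1` positivity follows by comparing quasi-arithmetic
means: `Θ (c ·)` is a strictly convex function of `Θ` (`theta_tangent`), because `-Θ'` is strictly
log-concave as a function of `log t`. The latter is reduced by a monotone l'Hôpital argument to
the same property of `U t = ∑ k / (k + 1) exp (-k t)` (`E1_strictMono`), which
comes down to the rational estimate `y + y³ / 3 ≤ artanh y` (`key_quad`).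
-/

/-- For a bit string, apply from left to right the map `x ↦ x²` for each bit `0`
and the map `x ↦ 1 − (1 − x)²` for each bit `1`. -/
def Istr : List ℕ → ℝ → ℝ
  | [], x => x
  | w :: ws, x => Istr ws (if w = 0 then x ^ 2 else 1 - (1 - x) ^ 2)

open Real Set Filter Topology

namespace DyckPolar

/-! ### Elementary estimates on the logarithm -/

lemma log_lower {x : ℝ} (hx0 : 0 < x) (hx1 : x < 1) :
    2 * (x / (2 - x)) + 2 / 3 * (x / (2 - x)) ^ 3 ≤ -log (1 - x) := by
  have h2 : 0 < 2 - x := by linarith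
  set y := x / (2 - x) with hy
  have hy0 : 0 < y := by positivity
  have hy1 : y < 1 := by rw [hy, div_lt_one h2]; linarith
  have hs := Real.hasSum_log_sub_log_of_abs_lt_one (x := y) (by rw [abs_of_pos hy0]; exact hy1)
  have hle := hs.summable.sum_le_tsum (Finset.range 2) (fun i _ => by positivity)
  rw [hs.tsum_eq] at hle
  have e1 : 1 + y = 2 / (2 - x) := by rw [hy]; field_simp; ring
  have e2 : 1 - y = 2 * (1 - x) / (2 - x) := by rw [hy]; field_simp; ring
  have h1x : 0 < 1 - x := by linarith
  rw [e1, e2, log_div (by norm_num) h2.ne', log_div (by positivity) h2.ne',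
    log_mul (by norm_num) h1x.ne'] at hle
  norm_num [Finset.sum_range_succ] at hle
  linarith

lemma log_upper {x : ℝ} (hx1 : x < 1) : -log (1 - x) ≤ x / (1 - x) := by
  have h1x : 0 < 1 - x := by linarith
  have h := Real.one_sub_inv_le_log_of_pos h1x
  have : x / (1 - x) = (1 - x)⁻¹ - 1 := by field_simp; ring
  linarith

/-- The quadratic of `key_quad` at the lower bound of `log_lower`, with `y = x / (2 - x)`. -/
lemma quad_lo {y : ℝ} (hy0 : 0 < y) (hy1 : y < 1) :
    0 < -(2 * y / (1 + y)) ^ 2 * (2 * y / (1 + y) + 4)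
      + 2 * (2 * y + 2 / 3 * y ^ 3) * (2 * y / (1 + y)) * (3 - 2 * (2 * y / (1 + y)))
      - 2 * (2 * y + 2 / 3 * y ^ 3) ^ 2 * (1 - 2 * y / (1 + y)) ^ 2 := by
  have e : -(2 * y / (1 + y)) ^ 2 * (2 * y / (1 + y) + 4)
      + 2 * (2 * y + 2 / 3 * y ^ 3) * (2 * y / (1 + y)) * (3 - 2 * (2 * y / (1 + y)))
      - 2 * (2 * y + 2 / 3 * y ^ 3) ^ 2 * (1 - 2 * y / (1 + y)) ^ 2
      = 8 * y ^ 4 / (3 * (1 + y) ^ 3)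
        * (1 + y + y ^ 2 - 2 * y ^ 3 - y ^ 2 / 3 * ((1 - y) * (1 - y ^ 2))) := by
    field_simp; ring
  rw [e]
  have h2 : y ^ 2 < 1 := by nlinarith
  have h3 : y ^ 3 < y := by nlinarith
  have h4 : (1 - y) * (1 - y ^ 2) ≤ 1 := by nlinarith [sq_nonneg y]
  have h5 : y ^ 2 / 3 * ((1 - y) * (1 - y ^ 2)) ≤ y ^ 2 / 3 * 1 := by gcongr
  refine mul_pos (by positivity) ?_
  nlinarith [sq_nonneg y]

/-- A quadratic that is concave in `log (1 - x)`: it is positive because it is positive at the two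
rational bounds `log_lower` and `log_upper` for `-log (1 - x)`. -/
lemma key_quad {x : ℝ} (hx0 : 0 < x) (hx1 : x < 1) :
    0 < -x ^ 2 * (x + 4) + 2 * (-log (1 - x)) * x * (3 - 2 * x)
      - 2 * (-log (1 - x)) ^ 2 * (1 - x) ^ 2 := by
  have hlo := log_lower hx0 hx1
  have hhi := log_upper hx1
  have h1x : 0 < 1 - x := by linarith
  have h2 : 0 < 2 - x := by linarith
  set l := -log (1 - x)
  set lo := 2 * (x / (2 - x)) + 2 / 3 * (x / (2 - x)) ^ 3 with hlodef
  set hi := x / (1 - x) with hhidef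
  set q : ℝ → ℝ := fun l => -x ^ 2 * (x + 4) + 2 * l * x * (3 - 2 * x) - 2 * l ^ 2 * (1 - x) ^ 2
    with hq
  have q_hi : 0 < q hi := by
    have : q hi = x ^ 3 * (1 + x) / (1 - x) := by
      simp only [hq, hhidef]; field_simp; ring
    rw [this]; positivity
  have q_lo : 0 < q lo := by
    have hy0 : 0 < x / (2 - x) := by positivity
    have hy1 : x / (2 - x) < 1 := by rw [div_lt_one h2]; linarith
    have hx : x = 2 * (x / (2 - x)) / (1 + x / (2 - x)) := by field_simp; ring
    have := quad_lo hy0 hy1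
    rw [← hx] at this
    exact this
  change 0 < q l
  by_contra hneg
  push Not at hneg
  have : lo < hi := by
    rcases lt_or_eq_of_le (hlo.trans hhi) with h | h
    · exact h
    · have : l = lo := le_antisymm (h ▸ hhi) hlo
      rw [this] at hneg; linarith
  have hconc : (hi - lo) * q l - (hi - l) * q lo - (l - lo) * q hi
      = 2 * (1 - x) ^ 2 * ((hi - l) * (l - lo) * (hi - lo)) := by
    simp only [hq]; ring
  have h3 : 0 ≤ 2 * (1 - x) ^ 2 * ((hi - l) * (l - lo) * (hi - lo)) := by
    have := sub_nonneg.2 hlo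
    have := sub_nonneg.2 hhi
    have : 0 ≤ hi - lo := by linarith
    positivity
  have h4 : (hi - lo) * q l ≤ 0 := mul_nonpos_of_nonneg_of_nonpos (by linarith) hneg
  have h5 : 0 ≤ (hi - l) * q lo := mul_nonneg (by linarith) q_lo.le
  have h6 : 0 ≤ (l - lo) * q hi := mul_nonneg (by linarith) q_hi.le
  have h7 : (hi - l) * q lo = 0 := by linarith
  have h8 : (l - lo) * q hi = 0 := by linarith
  rcases mul_eq_zero.1 h7 with h | h
  · rcases mul_eq_zero.1 h8 with h' | h' <;> linarith
  · linarith

/-! ### The auxiliary functions `Θ`, `P`, `U` -/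

/-- `Θ t = -(e^t - 1) log (1 - e^{-t}) / t`. If `x = e^{-t}` moves along the flow
`x ↦ 1 - (1 - x) ^ d`, then `t` decreases at logarithmic rate `Θ t` with respect to `log d`. -/
noncomputable def Theta (t : ℝ) : ℝ := -(exp t - 1) * log (1 - exp (-t)) / t

/-- `P t = -t² Θ'(t)`. -/
noncomputable def P (t : ℝ) : ℝ := t + log (1 - exp (-t)) * (t * exp t - exp t + 1)

/-- `U t = P'(t) / t`, in closed form; as a series it is `∑ k / (k + 1) e^{-kt}`. -/
noncomputable def U (t : ℝ) : ℝ := 1 / (1 - exp (-t)) + exp t * log (1 - exp (-t))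

/-- `U1 = -U'`. -/
noncomputable def U1 (t : ℝ) : ℝ :=
  exp (-t) / (1 - exp (-t)) ^ 2 - 1 / (1 - exp (-t)) - exp t * log (1 - exp (-t))

/-- `U2 = U''`. -/
noncomputable def U2 (t : ℝ) : ℝ :=
  2 * exp (-t) ^ 2 / (1 - exp (-t)) ^ 3 + 1 / (1 - exp (-t)) + exp t * log (1 - exp (-t))

/-- The negated logarithmic slope `-d log U / d log t`. -/
noncomputable def E1 (t : ℝ) : ℝ := t * U1 t / U t

lemma one_sub_exp_pos {t : ℝ} (ht : 0 < t) : 0 < 1 - exp (-t) := by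
  have : exp (-t) < 1 := by rw [exp_lt_one_iff]; linarith
  linarith

lemma hasDerivAt_one_sub (t : ℝ) : HasDerivAt (fun t => 1 - exp (-t)) (exp (-t)) t := by
  have := ((hasDerivAt_id t).neg.exp).const_sub 1
  simpa using this

lemma hasDerivAt_L {t : ℝ} (ht : 0 < t) :
    HasDerivAt (fun t => log (1 - exp (-t))) (exp (-t) / (1 - exp (-t))) t :=
  (hasDerivAt_one_sub t).log (one_sub_exp_pos ht).ne'

lemma hasDerivAt_Theta {t : ℝ} (ht : 0 < t) : HasDerivAt Theta (-P t / t ^ 2) t := by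
  have h := ((((Real.hasDerivAt_exp t).sub_const 1).neg.mul (hasDerivAt_L ht))).div
    (hasDerivAt_id t) ht.ne'
  refine h.congr_deriv ?_
  have h1 := (one_sub_exp_pos ht).ne'
  have h3 : exp (-t) = (exp t)⁻¹ := exp_neg t
  have h4 := (exp_pos t).ne'
  have key : (exp t - 1) * (exp (-t) / (1 - exp (-t))) = 1 := by
    have : exp t * exp (-t) = 1 := by rw [← exp_add]; simp
    field_simp
    linear_combination this
  simp only [id, P, Pi.neg_apply, Pi.mul_apply]
  congr 1
  linear_combination (-t) * key

lemma hasDerivAt_P {t : ℝ} (ht : 0 < t) : HasDerivAt P (t * U t) t := by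
  have h := (hasDerivAt_id t).add ((hasDerivAt_L ht).mul
    ((((hasDerivAt_id t).mul (Real.hasDerivAt_exp t)).sub (Real.hasDerivAt_exp t)).add_const 1))
  refine h.congr_deriv ?_
  have h1 := (one_sub_exp_pos ht).ne'
  have : exp t * exp (-t) = 1 := by rw [← exp_add]; simp
  simp only [id, U, Pi.mul_apply, Pi.sub_apply]
  field_simp
  linear_combination (t - 1) * this

lemma hasDerivAt_U {t : ℝ} (ht : 0 < t) : HasDerivAt U (-U1 t) t := by
  have h1 := (one_sub_exp_pos ht).ne'
  have h := ((hasDerivAt_const t (1 : ℝ)).div (hasDerivAt_one_sub t) h1).add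
    ((Real.hasDerivAt_exp t).mul (hasDerivAt_L ht))
  refine h.congr_deriv ?_
  have : exp t * exp (-t) = 1 := by rw [← exp_add]; simp
  simp only [U1]
  field_simp
  linear_combination (1 - exp (-t)) * this

lemma hasDerivAt_U1 {t : ℝ} (ht : 0 < t) : HasDerivAt U1 (-U2 t) t := by
  have h1 := (one_sub_exp_pos ht).ne'
  have he : HasDerivAt (fun t : ℝ => exp (-t)) (-exp (-t)) t := by
    simpa using (hasDerivAt_id t).neg.exp
  have h := ((he.div ((hasDerivAt_one_sub t).pow 2) (pow_ne_zero 2 h1)).sub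
    ((hasDerivAt_const t (1 : ℝ)).div (hasDerivAt_one_sub t) h1)).sub
    ((Real.hasDerivAt_exp t).mul (hasDerivAt_L ht))
  refine h.congr_deriv ?_
  have : exp t * exp (-t) = 1 := by rw [← exp_add]; simp
  simp only [U2, Pi.pow_apply]
  field_simp
  push_cast
  linear_combination (-(1 - exp (-t)) ^ 3) * this

lemma U_pos {t : ℝ} (ht : 0 < t) : 0 < U t := by
  have h1 := one_sub_exp_pos ht
  have hne : (1 - exp (-t))⁻¹ ≠ 1 := by
    rw [Ne, inv_eq_one]
    have := exp_pos (-t)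
    intro h; linarith
  have h2 := Real.log_lt_sub_one_of_pos (inv_pos.2 h1) hne
  rw [log_inv] at h2
  have h3 : exp t * ((1 - exp (-t))⁻¹ - 1) = 1 / (1 - exp (-t)) := by
    have : exp t * exp (-t) = 1 := by rw [← exp_add]; simp
    field_simp
    linear_combination this
  have h4 := mul_lt_mul_of_pos_left h2 (exp_pos t)
  unfold U
  linarith

/-- `t = -log x ≤ (1 - x²) / (2x)` with `x = e^{-t}`. -/
lemma t_le {t : ℝ} (ht : 0 < t) : t ≤ (1 - exp (-t) ^ 2) / (2 * exp (-t)) := by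
  have h : t ≤ sinh t := (Real.self_lt_sinh_iff.2 ht).le
  have : (1 - exp (-t) ^ 2) / (2 * exp (-t)) = sinh t := by
    rw [sinh_eq, exp_neg]; have := exp_pos t; field_simp
  linarith

/-- Positivity of the numerator of `E1'`. -/
lemma E1_num_pos {t : ℝ} (ht : 0 < t) : 0 < U1 t * U t - t * (U2 t * U t - U1 t ^ 2) := by
  have hy := one_sub_exp_pos ht
  have hx := exp_pos (-t)
  have hq := key_quad hx (by linarith : exp (-t) < 1)
  have hU := U_pos ht
  have ht' := t_le ht
  have hE : exp t = 1 / exp (-t) := by rw [exp_neg]; simp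
  set x := exp (-t) with hxdef
  set L := log (1 - x) with hL
  have eK : U2 t * U t - U1 t ^ 2 = (1 - (1 - x) ^ 2 + 2 * (1 - x) * L) / (1 - x) ^ 4 := by
    simp only [U, U1, U2, ← hxdef, ← hL, hE]; field_simp; ring
  have em : U1 t * U t
      = (x + L * (1 - x)) * (x ^ 2 - x * (1 - x) - L * (1 - x) ^ 2) / ((1 - x) ^ 3 * x ^ 2) := by
    simp only [U, U1, ← hxdef, ← hL, hE]; field_simp
  have hKpos : 0 ≤ U2 t * U t - U1 t ^ 2 := by
    rw [eK]
    refine div_nonneg ?_ (by positivity)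
    -- `2 log r ≤ r - 1/r` for `r = 1 / (1 - x) ≥ 1`
    have hr : 0 < -L := by
      have := Real.log_neg hy (by linarith)
      linarith
    have hs := (Real.self_lt_sinh_iff.2 hr).le
    rw [sinh_eq, neg_neg, exp_neg, hL, exp_log hy] at hs
    have := mul_le_mul_of_nonneg_left hs (by positivity : 0 ≤ 2 * (1 - x))
    have e : 2 * (1 - x) * (((1 - x)⁻¹ - (1 - x)) / 2) = 1 - (1 - x) ^ 2 := by field_simp
    rw [e] at this
    linarith
  have h1 : t * (U2 t * U t - U1 t ^ 2) ≤ (1 - x ^ 2) / (2 * x) * (U2 t * U t - U1 t ^ 2) :=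
    mul_le_mul_of_nonneg_right ht' hKpos
  have h2 : U1 t * U t - (1 - x ^ 2) / (2 * x) * (U2 t * U t - U1 t ^ 2)
      = (-x ^ 2 * (x + 4) + 2 * (-L) * x * (3 - 2 * x) - 2 * (-L) ^ 2 * (1 - x) ^ 2)
        / (2 * (1 - x) ^ 2 * x ^ 2) := by
    rw [em, eK]; field_simp; ring
  have h3 : 0 < U1 t * U t - (1 - x ^ 2) / (2 * x) * (U2 t * U t - U1 t ^ 2) := by
    rw [h2]; positivity
  linarith

lemma E1_strictMono : StrictMonoOn E1 (Ioi 0) := by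
  have hd : ∀ t ∈ Ioi (0 : ℝ), HasDerivAt E1
      ((U1 t * U t - t * (U2 t * U t - U1 t ^ 2)) / U t ^ 2) t := by
    intro t ht
    have h := ((hasDerivAt_id t).mul (hasDerivAt_U1 ht)).div (hasDerivAt_U ht) (U_pos ht).ne'
    refine h.congr_deriv ?_
    simp only [id, Pi.mul_apply]
    congr 1; ring
  refine strictMonoOn_of_deriv_pos (convex_Ioi 0)
    (fun t ht => (hd t ht).continuousAt.continuousWithinAt) ?_
  intro t ht
  rw [interior_Ioi] at ht
  rw [(hd t ht).deriv]
  have := E1_num_pos ht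
  have := U_pos ht
  positivity

/-! ### Monotone l'Hôpital: from `U` to `P` -/

lemma pos_of_deriv_pos {f f' : ℝ → ℝ} {T : ℝ} (hT : 0 < T)
    (hd : ∀ t, 0 < t → HasDerivAt f (f' t) t) (hpos : ∀ t, 0 < t → t < T → 0 < f' t)
    (hlim : Tendsto f (𝓝[>] 0) (𝓝 0)) : 0 < f T := by
  have hm : StrictMonoOn f (Ioc 0 T) := by
    refine strictMonoOn_of_deriv_pos (convex_Ioc 0 T)
      (fun t ht => (hd t ht.1).continuousAt.continuousWithinAt) ?_
    intro t ht
    rw [interior_Ioc] at ht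
    rw [(hd t ht.1).deriv]
    exact hpos t ht.1 ht.2
  have h1 : 0 ≤ f (T / 2) := by
    refine le_of_tendsto hlim ?_
    filter_upwards [Ioo_mem_nhdsGT (half_pos hT)] with s hs
    exact (hm ⟨hs.1, by linarith [hs.2]⟩ ⟨by linarith, by linarith⟩ hs.2).le
  exact h1.trans_lt (hm ⟨by linarith, by linarith⟩ ⟨hT, le_rfl⟩ (by linarith))

lemma tendsto_ylogy :
    Tendsto (fun t : ℝ => (1 - exp (-t)) * log (1 - exp (-t))) (𝓝[>] 0) (𝓝 0) := by
  have : Continuous (fun t : ℝ => (1 - exp (-t)) * log (1 - exp (-t))) :=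
    Real.continuous_mul_log.comp (by fun_prop : Continuous fun t : ℝ => 1 - exp (-t))
  have h := this.tendsto 0
  simp only [neg_zero, exp_zero, sub_self, zero_mul] at h
  exact h.mono_left nhdsWithin_le_nhds

/-- `t ≤ e^t (1 - e^{-t})`. -/
lemma t_le_mul {t : ℝ} : t ≤ exp t * (1 - exp (-t)) := by
  have h := add_one_le_exp t
  have : exp t * exp (-t) = 1 := by rw [← exp_add]; simp
  rw [mul_sub, this]; linarith

lemma tendsto_P : Tendsto P (𝓝[>] 0) (𝓝 0) := by
  have hlow : Tendsto (fun t : ℝ => t + t * exp t * ((1 - exp (-t)) * log (1 - exp (-t))))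
      (𝓝[>] 0) (𝓝 0) := by
    have h1 : Tendsto (fun t : ℝ => t) (𝓝[>] 0) (𝓝 0) := tendsto_id.mono_left nhdsWithin_le_nhds
    have h2 : Tendsto (fun t : ℝ => t * exp t) (𝓝[>] 0) (𝓝 0) := by
      have := (by fun_prop : Continuous fun t : ℝ => t * exp t).tendsto 0
      simp only [zero_mul] at this
      exact this.mono_left nhdsWithin_le_nhds
    simpa using h1.add (h2.mul tendsto_ylogy)
  refine tendsto_of_tendsto_of_tendsto_of_le_of_le' hlow
    (tendsto_id.mono_left nhdsWithin_le_nhds) ?_ ?_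
  · filter_upwards [self_mem_nhdsWithin] with t ht
    have ht : 0 < t := ht
    have hy := one_sub_exp_pos ht
    have hL : log (1 - exp (-t)) ≤ 0 :=
      (Real.log_neg hy (by linarith [exp_pos (-t)])).le
    have h1 : t * exp t - exp t + 1 ≤ t * exp t * (1 - exp (-t)) := by
      have h := add_one_le_exp t
      have : exp t * exp (-t) = 1 := by rw [← exp_add]; simp
      have e : t * exp t * (1 - exp (-t)) = t * exp t - t := by linear_combination (-t) * this
      linarith
    have h2 := mul_le_mul_of_nonpos_left h1 hL
    unfold P
    nlinarith [h2]
  · filter_upwards [self_mem_nhdsWithin] with t ht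
    have ht : 0 < t := ht
    have hy := one_sub_exp_pos ht
    have hL : log (1 - exp (-t)) ≤ 0 :=
      (Real.log_neg hy (by linarith [exp_pos (-t)])).le
    have h1 : 0 ≤ t * exp t - exp t + 1 := by
      have h := add_one_le_exp (-t)
      have h2 := mul_le_mul_of_nonneg_left h (exp_pos t).le
      have : exp t * exp (-t) = 1 := by rw [← exp_add]; simp
      rw [this] at h2
      linarith
    have h2 := mul_nonpos_of_nonpos_of_nonneg hL h1
    simp only [P, id]
    linarith

lemma tendsto_Q : Tendsto (fun t => t ^ 2 * U t) (𝓝[>] 0) (𝓝 0) := by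
  have hup : Tendsto (fun t : ℝ => t * exp t) (𝓝[>] 0) (𝓝 0) := by
    have := (by fun_prop : Continuous fun t : ℝ => t * exp t).tendsto 0
    simp only [zero_mul] at this
    exact this.mono_left nhdsWithin_le_nhds
  refine tendsto_of_tendsto_of_tendsto_of_le_of_le' tendsto_const_nhds hup ?_ ?_
  · filter_upwards [self_mem_nhdsWithin] with t ht
    have := U_pos ht
    positivity
  · filter_upwards [self_mem_nhdsWithin] with t ht
    have ht : 0 < t := ht
    have hy := one_sub_exp_pos ht
    have hL : log (1 - exp (-t)) ≤ 0 :=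
      (Real.log_neg hy (by linarith [exp_pos (-t)])).le
    have h1 : U t ≤ 1 / (1 - exp (-t)) := by
      unfold U
      linarith [mul_nonpos_of_nonneg_of_nonpos (exp_pos t).le hL]
    have h2 : t * (1 / (1 - exp (-t))) ≤ exp t := by
      rw [mul_one_div, div_le_iff₀ hy]; exact t_le_mul
    calc t ^ 2 * U t ≤ t ^ 2 * (1 / (1 - exp (-t))) := by gcongr
      _ = t * (t * (1 / (1 - exp (-t)))) := by ring
      _ ≤ t * exp t := by gcongr

lemma P_pos {t : ℝ} (ht : 0 < t) : 0 < P t :=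
  pos_of_deriv_pos ht (fun _ hs => hasDerivAt_P hs)
    (fun _ hs _ => mul_pos hs (U_pos hs)) tendsto_P

lemma hasDerivAt_Q {t : ℝ} (ht : 0 < t) :
    HasDerivAt (fun t => t ^ 2 * U t) (t * U t * (2 - E1 t)) t := by
  have h := ((hasDerivAt_id t).pow 2).mul (hasDerivAt_U ht)
  refine h.congr_deriv ?_
  have := (U_pos ht).ne'
  simp only [id, E1, Pi.pow_apply]
  field_simp
  push_cast
  ring

lemma Q_gt {t : ℝ} (ht : 0 < t) : (2 - E1 t) * P t < t ^ 2 * U t := by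
  have h := pos_of_deriv_pos (f := fun s => s ^ 2 * U s - (2 - E1 t) * P s)
    (f' := fun s => s * U s * (E1 t - E1 s)) ht ?_ ?_ ?_
  · linarith
  · intro s hs
    refine ((hasDerivAt_Q hs).sub ((hasDerivAt_P hs).const_mul (2 - E1 t))).congr_deriv ?_
    ring
  · intro s hs hst
    have := E1_strictMono hs ht hst
    exact mul_pos (mul_pos hs (U_pos hs)) (by linarith)
  · simpa using tendsto_Q.sub (tendsto_P.const_mul (2 - E1 t))

/-- The logarithmic slope `d log P / d log t` is strictly decreasing. -/
lemma slope_anti : StrictAntiOn (fun t => t ^ 2 * U t / P t) (Ioi 0) := by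
  have hd : ∀ t ∈ Ioi (0 : ℝ), HasDerivAt (fun t => t ^ 2 * U t / P t)
      (t * U t * ((2 - E1 t) * P t - t ^ 2 * U t) / P t ^ 2) t := by
    intro t ht
    refine ((hasDerivAt_Q ht).div (hasDerivAt_P ht) (P_pos ht).ne').congr_deriv ?_
    congr 1; ring
  refine strictAntiOn_of_deriv_neg (convex_Ioi 0)
    (fun t ht => (hd t ht).continuousAt.continuousWithinAt) ?_
  intro t ht
  rw [interior_Ioi] at ht
  rw [(hd t ht).deriv]
  have h1 := Q_gt ht
  have h2 := P_pos ht
  have h3 := U_pos ht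
  refine div_neg_of_neg_of_pos (mul_neg_of_pos_of_neg (mul_pos ht h3) (by linarith)) (by positivity)

lemma ratio_anti {c : ℝ} (hc : 1 < c) : StrictAntiOn (fun t => P (c * t) / P t) (Ioi 0) := by
  have hc0 : 0 < c := by linarith
  have hd : ∀ t ∈ Ioi (0 : ℝ), HasDerivAt (fun t => P (c * t) / P t)
      ((c * t * U (c * t) * c * P t - P (c * t) * (t * U t)) / P t ^ 2) t := by
    intro t ht
    have h1 : HasDerivAt (fun t => P (c * t)) (c * t * U (c * t) * c) t := by
      have := (hasDerivAt_P (mul_pos hc0 ht)).comp t ((hasDerivAt_id t).const_mul c)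
      simpa [Function.comp_def] using this
    exact h1.div (hasDerivAt_P ht) (P_pos ht).ne'
  refine strictAntiOn_of_deriv_neg (convex_Ioi 0)
    (fun t ht => (hd t ht).continuousAt.continuousWithinAt) ?_
  intro t ht
  rw [interior_Ioi] at ht
  rw [(hd t ht).deriv]
  have ht : 0 < t := ht
  have hct := mul_pos hc0 ht
  have h1 := slope_anti ht hct (by nlinarith : t < c * t)
  have hP := P_pos ht
  have hPc := P_pos hct
  simp only at h1
  rw [div_lt_div_iff₀ hPc hP] at h1
  refine div_neg_of_neg_of_pos ?_ (by positivity)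
  have h2 : t * (c * t * U (c * t) * c * P t - P (c * t) * (t * U t)) < 0 := by nlinarith [h1]
  by_contra h
  push Not at h
  have := mul_nonneg ht.le h
  linarith

/-- Tangent line inequality, at the point `log 2`, for `Θ (c ·)` as a convex function of `Θ`. -/
lemma theta_tangent {c : ℝ} (hc : 1 < c) : ∃ lam : ℝ, ∀ t, 0 < t → t ≠ log 2 →
    lam * (Theta t - Theta (log 2)) < Theta (c * t) - Theta (c * log 2) := by
  have hc0 : 0 < c := by linarith
  have hl : 0 < log 2 := log_pos (by norm_num)
  set r := P (c * log 2) / P (log 2) with hr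
  refine ⟨r / c, fun t ht hne => ?_⟩
  set D : ℝ → ℝ := fun t => Theta (c * t) - r / c * Theta t with hD
  have hd : ∀ t, 0 < t → HasDerivAt D (P t / (c * t ^ 2) * (r - P (c * t) / P t)) t := by
    intro t ht
    have h1 : HasDerivAt (fun t => Theta (c * t)) (-P (c * t) / (c * t) ^ 2 * c) t := by
      have := (hasDerivAt_Theta (mul_pos hc0 ht)).comp t ((hasDerivAt_id t).const_mul c)
      simpa [Function.comp_def] using this
    refine (h1.sub ((hasDerivAt_Theta ht).const_mul (r / c))).congr_deriv ?_
    have := (P_pos ht).ne'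
    field_simp
    ring
  suffices h : D (log 2) < D t by
    simp only [hD] at h; linarith
  rcases lt_or_gt_of_ne hne with h | h
  · have : StrictAntiOn D (Icc t (log 2)) := by
      refine strictAntiOn_of_deriv_neg (convex_Icc _ _)
        (fun s hs => (hd s (ht.trans_le hs.1)).continuousAt.continuousWithinAt) ?_
      intro s hs
      rw [interior_Icc] at hs
      have hs0 : 0 < s := ht.trans hs.1
      rw [(hd s hs0).deriv]
      have h1 := ratio_anti hc hs0 hl hs.2
      have := P_pos hs0
      exact mul_neg_of_pos_of_neg (by positivity) (by simp only at h1; linarith)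
    exact this ⟨le_rfl, h.le⟩ ⟨h.le, le_rfl⟩ h
  · have : StrictMonoOn D (Icc (log 2) t) := by
      refine strictMonoOn_of_deriv_pos (convex_Icc _ _)
        (fun s hs => (hd s (hl.trans_le hs.1)).continuousAt.continuousWithinAt) ?_
      intro s hs
      rw [interior_Icc] at hs
      have hs0 : 0 < s := hl.trans hs.1
      rw [(hd s hs0).deriv]
      have h1 := ratio_anti hc hl hs0 hs.1
      have := P_pos hs0
      exact mul_pos (by positivity) (by simp only at h1; linarith)
    exact this ⟨le_rfl, h.le⟩ ⟨h.le, le_rfl⟩ h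

/-! ### The flow `x ↦ 1 - (1 - x) ^ d` -/

lemma Theta_log_two : Theta (log 2) = 1 := by
  have hl : 0 < log 2 := log_pos (by norm_num)
  have h : log ((1 : ℝ) - 2⁻¹) = -log 2 := by rw [← log_inv]; norm_num
  unfold Theta
  rw [exp_neg, exp_log (by norm_num), h]
  field_simp
  norm_num

lemma exp_mul_Theta {a b : ℝ} (ha : 0 < a) (hab : exp (-a) + exp (-b) = 1) :
    exp (-a) * a * Theta a = exp (-b) * b := by
  have h1 : 1 - exp (-a) = exp (-b) := by linarith
  have : exp a * exp (-a) = 1 := by rw [← exp_add]; simp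
  unfold Theta
  rw [h1, log_exp]
  field_simp
  linear_combination b * this + b * h1

lemma flow_deriv_pos {a b c : ℝ} (ha : 0 < a) (hb : 0 < b) (hab : a ≠ b)
    (hsum : exp (-a) + exp (-b) = 1) (hc : 1 < c) :
    0 < exp (-a) * a * (Theta (c * a) - Theta (c * log 2))
      + exp (-b) * b * (Theta (c * b) - Theta (c * log 2)) := by
  have h2 : exp (-log 2) = 1 / 2 := by rw [exp_neg, exp_log (by norm_num)]; norm_num
  have hal : a ≠ log 2 := by
    rintro rfl
    apply hab
    have : exp (-b) = exp (-log 2) := by linarith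
    have := exp_injective this
    linarith
  have hbl : b ≠ log 2 := by
    rintro rfl
    apply hab
    have : exp (-a) = exp (-log 2) := by linarith
    have := exp_injective this
    linarith
  obtain ⟨lam, hlam⟩ := theta_tangent hc
  have e1 := exp_mul_Theta ha hsum
  have e2 := exp_mul_Theta hb (by linarith : exp (-b) + exp (-a) = 1)
  have i1 := mul_lt_mul_of_pos_left (hlam a ha hal) (mul_pos (exp_pos (-a)) ha)
  have i2 := mul_lt_mul_of_pos_left (hlam b hb hbl) (mul_pos (exp_pos (-b)) hb)
  rw [Theta_log_two] at i1 i2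
  have e3 : exp (-a) * a * (lam * (Theta a - 1)) + exp (-b) * b * (lam * (Theta b - 1)) = 0 := by
    linear_combination lam * e1 + lam * e2
  linarith

/-- The involution `t ↦ -log (1 - e^{-t})` of `(0, ∞)`, which is `x ↦ 1 - x` read in the
coordinate `t = -log x`. In this coordinate the flow is `t ↦ phi (d * phi t)`. -/
noncomputable def phi (t : ℝ) : ℝ := -log (1 - exp (-t))

lemma phi_pos {t : ℝ} (ht : 0 < t) : 0 < phi t := by
  have := Real.log_neg (one_sub_exp_pos ht) (by linarith [exp_pos (-t)])
  unfold phi; linarith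

lemma phi_anti {s t : ℝ} (hs : 0 < s) (hst : s < t) : phi t < phi s := by
  unfold phi
  have h : exp (-t) < exp (-s) := exp_lt_exp.2 (by linarith)
  have := Real.log_lt_log (one_sub_exp_pos hs) (by linarith : 1 - exp (-s) < 1 - exp (-t))
  linarith

lemma exp_neg_phi {t : ℝ} (ht : 0 < t) : exp (-phi t) = 1 - exp (-t) := by
  unfold phi; rw [neg_neg, exp_log (one_sub_exp_pos ht)]

lemma hasDerivAt_phi_mul {w d : ℝ} (hw : 0 < w) (hd : 0 < d) :
    HasDerivAt (fun d => phi (w * d)) (-(phi (w * d) * Theta (phi (w * d)) / d)) d := by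
  have hwd := mul_pos hw hd
  have h := ((hasDerivAt_L hwd).comp d ((hasDerivAt_id d).const_mul w)).neg
  have h' : HasDerivAt (fun d => phi (w * d))
      (-(exp (-(w * d)) / (1 - exp (-(w * d))) * (w * 1))) d := h
  refine h'.congr_deriv ?_
  have hp := phi_pos hwd
  have h1 := one_sub_exp_pos hwd
  have e := exp_neg_phi hwd
  have e' : exp (phi (w * d)) = 1 / (1 - exp (-(w * d))) := by
    rw [← e, exp_neg]; simp
  have eT : phi (w * d) * Theta (phi (w * d))
      = w * d * (exp (-(w * d)) / (1 - exp (-(w * d)))) := by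
    unfold Theta
    rw [e, e', show 1 - (1 - exp (-(w * d))) = exp (-(w * d)) by ring, log_exp]
    field_simp
    ring
  rw [eT]
  field_simp

/-- Along the flow, `u ^ s + v ^ s ≥ 1` with `s = log 2 / (-log z)` persists while `z ≤ 1/2`.
Here `u, v, z` are `exp (-phi (w * d))` for `w = p, q, r`. -/
lemma flow {p q r D : ℝ} (hp : 0 < p) (hpq : p < q) (hr : 0 < r) (hD : 1 ≤ D)
    (hz : log 2 ≤ phi (r * D))
    (h1 : 1 ≤ exp (-(log 2 * (phi (p * 1) / phi (r * 1))))
      + exp (-(log 2 * (phi (q * 1) / phi (r * 1))))) :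
    1 ≤ exp (-(log 2 * (phi (p * D) / phi (r * D))))
      + exp (-(log 2 * (phi (q * D) / phi (r * D)))) := by
  have hq : 0 < q := hp.trans hpq
  have hl : 0 < log 2 := log_pos (by norm_num)
  -- derivative of a single summand
  have hterm : ∀ w, 0 < w → ∀ d, 0 < d →
      HasDerivAt (fun d => exp (-(log 2 * (phi (w * d) / phi (r * d)))))
        (exp (-(log 2 * (phi (w * d) / phi (r * d)))) * (log 2 * (phi (w * d) / phi (r * d)))
          * (Theta (phi (w * d)) - Theta (phi (r * d))) / d) d := by
    intro w hw d hd
    have hrd := (phi_pos (mul_pos hr hd)).ne'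
    have h := (((hasDerivAt_phi_mul hw hd).div (hasDerivAt_phi_mul hr hd) hrd).const_mul
      (log 2)).neg.exp
    refine h.congr_deriv ?_
    simp only [Pi.neg_apply, Pi.div_apply]
    field_simp
    ring
  set Psi : ℝ → ℝ := fun d => exp (-(log 2 * (phi (p * d) / phi (r * d))))
      + exp (-(log 2 * (phi (q * d) / phi (r * d)))) with hPsi
  have hder := fun d (hd : 0 < d) => (hterm p hp d hd).add (hterm q hq d hd)
  have main := image_le_of_deriv_right_lt_deriv_boundary' (f := fun _ : ℝ => (1 : ℝ))
    (f' := fun _ => 0) (a := 1) (b := D) continuousOn_const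
    (fun x _ => (hasDerivAt_const x (1 : ℝ)).hasDerivWithinAt) (B := Psi) h1
    (fun d hd => (hder d (by linarith [hd.1])).continuousAt.continuousWithinAt)
    (fun d hd => (hder d (by linarith [hd.1])).hasDerivWithinAt) ?_
  · exact main ⟨hD, le_rfl⟩
  · intro d hd heq
    have hd0 : 0 < d := by linarith [hd.1]
    have hz' : log 2 < phi (r * d) :=
      hz.trans_lt (phi_anti (mul_pos hr hd0) (mul_lt_mul_of_pos_left hd.2 hr))
    have hP := phi_pos (mul_pos hp hd0)
    have hQ := phi_pos (mul_pos hq hd0)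
    have hR := phi_pos (mul_pos hr hd0)
    have hPQ := phi_anti (mul_pos hp hd0) (mul_lt_mul_of_pos_right hpq hd0)
    have key := flow_deriv_pos (a := log 2 * (phi (p * d) / phi (r * d)))
      (b := log 2 * (phi (q * d) / phi (r * d))) (c := phi (r * d) / log 2)
      (by positivity) (by positivity)
      (by
        intro h
        have := mul_left_cancel₀ hl.ne' h
        rw [div_left_inj' hR.ne'] at this
        linarith) heq.symm (by rw [lt_div_iff₀ hl]; linarith)
    have ea : ∀ y, phi (r * d) / log 2 * (log 2 * (y / phi (r * d))) = y := by
      intro y; field_simp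
    have ec : phi (r * d) / log 2 * log 2 = phi (r * d) := by field_simp
    rw [ea, ea, ec] at key
    rw [← add_div]
    exact div_pos key hd0

/-! ### The invariant along the bit string -/

/-- `u ^ s + v ^ s ≥ 1`, where `s = log 2 / (-log z)` is the exponent with `z ^ s = 1/2`. -/
def PowInv (u v z : ℝ) : Prop :=
  1 ≤ exp (-(log 2 * (log u / log z))) + exp (-(log 2 * (log v / log z)))

lemma PowInv.half {u v : ℝ} (hu : 0 < u) (hv : 0 < v) :
    PowInv u v (1 / 2) ↔ 1 ≤ u + v := by
  have hl : 0 < log 2 := log_pos (by norm_num)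
  have h : log (1 / 2 : ℝ) = -log 2 := by rw [one_div, log_inv]
  have e : ∀ y, -(log 2 * (y / -log 2)) = y := by intro y; field_simp
  unfold PowInv
  rw [h, e, e, exp_log hu, exp_log hv]

lemma PowInv.sq {u v z : ℝ} (h : PowInv u v z) : PowInv (u ^ 2) (v ^ 2) (z ^ 2) := by
  unfold PowInv at *
  simp only [log_pow]
  rw [mul_div_mul_left _ _ (by norm_num), mul_div_mul_left _ _ (by norm_num)]
  exact h

lemma PowInv.flow {u v z D : ℝ} (hu : 0 < u) (huv : u < v) (hv : v < 1) (hz : 0 < z) (hz1 : z < 1)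
    (hD : 1 ≤ D) (hzD : 1 - exp (D * log (1 - z)) ≤ 1 / 2) (h : PowInv u v z) :
    PowInv (1 - exp (D * log (1 - u))) (1 - exp (D * log (1 - v)))
      (1 - exp (D * log (1 - z))) := by
  have e1 : ∀ w : ℝ, w < 1 → phi (-log (1 - w) * 1) = -log w := by
    intro w hw
    unfold phi
    rw [mul_one, neg_neg, exp_log (by linarith)]; congr 2; ring
  have eD : ∀ w : ℝ, phi (-log (1 - w) * D) = -log (1 - exp (D * log (1 - w))) := by
    intro w
    unfold phi
    congr 4; ring
  have hneg : ∀ w : ℝ, 0 < w → w < 1 → 0 < -log (1 - w) := by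
    intro w h0 h1
    have := Real.log_neg (by linarith : 0 < 1 - w) (by linarith)
    linarith
  have hlt : -log (1 - u) < -log (1 - v) := by
    have := Real.log_lt_log (by linarith : 0 < 1 - v) (by linarith : 1 - v < 1 - u)
    linarith
  have hzpos : 0 < 1 - exp (D * log (1 - z)) := by
    have : exp (D * log (1 - z)) < 1 := by
      rw [exp_lt_one_iff]
      nlinarith [hneg z hz hz1]
    linarith
  have hF := DyckPolar.flow (hneg u hu (by linarith)) hlt (hneg z hz hz1) hD
    (by
      rw [eD]
      have := Real.log_le_log hzpos hzD
      rw [one_div, log_inv] at this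
      linarith)
    (by
      rw [e1 u (by linarith), e1 v hv, e1 z hz1, neg_div_neg_eq, neg_div_neg_eq]
      exact h)
  rw [eD, eD, eD, neg_div_neg_eq, neg_div_neg_eq] at hF
  exact hF

lemma exp_two_log {w : ℝ} (hw : w < 1) : exp (2 * log (1 - w)) = (1 - w) ^ 2 := by
  rw [two_mul, exp_add, exp_log (by linarith)]; ring

lemma PowInv.cosq {u v z : ℝ} (hu : 0 < u) (huv : u < v) (hv : v < 1) (hz : 0 < z) (hz1 : z < 1)
    (hz' : 1 - (1 - z) ^ 2 ≤ 1 / 2) (h : PowInv u v z) :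
    PowInv (1 - (1 - u) ^ 2) (1 - (1 - v) ^ 2) (1 - (1 - z) ^ 2) := by
  have := PowInv.flow hu huv hv hz hz1 (by norm_num : (1 : ℝ) ≤ 2)
    (by rw [exp_two_log hz1]; exact hz') h
  rwa [exp_two_log hz1, exp_two_log hv, exp_two_log (by linarith)] at this

/-- The last step: the flow is stopped at the time `D ≤ 2` when `z` reaches `1/2`. -/
lemma PowInv.final {u v z : ℝ} (hu : 0 < u) (huv : u < v) (hv : v < 1) (hz : 0 < z)
    (hz1 : z ≤ 1 / 2) (hz' : 1 / 2 ≤ 1 - (1 - z) ^ 2) (h : PowInv u v z) :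
    1 ≤ (1 - (1 - u) ^ 2) + (1 - (1 - v) ^ 2) := by
  have hl : 0 < log 2 := log_pos (by norm_num)
  have hzn : log (1 - z) < 0 := Real.log_neg (by linarith) (by linarith)
  set D := -log 2 / log (1 - z) with hDdef
  have e : D * log (1 - z) = -log 2 := by rw [hDdef, div_mul_cancel₀ _ hzn.ne]
  have e2 : exp (D * log (1 - z)) = 1 / 2 := by
    rw [e, exp_neg, exp_log (by norm_num)]; norm_num
  have hD1 : 1 ≤ D := by
    rw [hDdef, le_div_iff_of_neg hzn]
    have := Real.log_le_log (by norm_num) (by linarith : (1 / 2 : ℝ) ≤ 1 - z)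
    rw [one_div, log_inv] at this
    linarith
  have hD2 : D ≤ 2 := by
    rw [hDdef, div_le_iff_of_neg hzn]
    have := Real.log_le_log (by nlinarith) (by linarith : (1 - z) ^ 2 ≤ 1 / 2)
    rw [one_div, log_inv, log_pow] at this
    push_cast at this
    linarith
  have hF := PowInv.flow hu huv hv hz (by linarith) hD1 (by rw [e2]; norm_num) h
  rw [e2, show (1 : ℝ) - 1 / 2 = 1 / 2 by norm_num] at hF
  have hmono : ∀ w : ℝ, 0 < w → w < 1 → 0 < 1 - exp (D * log (1 - w)) ∧
      1 - exp (D * log (1 - w)) ≤ 1 - (1 - w) ^ 2 := by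
    intro w h0 h1
    have hn := Real.log_neg (by linarith : 0 < 1 - w) (by linarith)
    constructor
    · have : exp (D * log (1 - w)) < 1 := by rw [exp_lt_one_iff]; nlinarith
      linarith
    · rw [← exp_two_log h1]
      have : exp (2 * log (1 - w)) ≤ exp (D * log (1 - w)) := exp_le_exp.2 (by nlinarith)
      linarith
  have hU := hmono u hu (by linarith)
  have hV := hmono v (by linarith) hv
  have := (PowInv.half hU.1 hV.1).1 hF
  linarith [hU.2, hV.2]

lemma Istr_append (l : List ℕ) (w : ℕ) (x : ℝ) :
    Istr (l ++ [w]) x = if w = 0 then (Istr l x) ^ 2 else 1 - (1 - Istr l x) ^ 2 := by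
  induction l generalizing x with
  | nil => simp [Istr]
  | cons b l ih => simp only [List.cons_append, Istr, ih]

lemma Istr_succ (a : ℕ → ℕ) (m : ℕ) (x : ℝ) :
    Istr ((List.range (m + 1)).map a) x =
      if a m = 0 then (Istr ((List.range m).map a) x) ^ 2
      else 1 - (1 - Istr ((List.range m).map a) x) ^ 2 := by
  rw [List.range_succ, List.map_append, List.map_singleton, Istr_append]

lemma Istr_compl (a : ℕ → ℕ) (n : ℕ) (ha : ∀ j < n, a j ≤ 1) (x : ℝ) :
    Istr ((List.range n).map (fun j => 1 - a j)) x = 1 - Istr ((List.range n).map a) (1 - x) := by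
  induction n with
  | zero => simp [Istr]
  | succ n ih =>
    have ih := ih (fun j hj => ha j (by omega))
    rw [Istr_succ, Istr_succ, ih]
    have := ha n (by omega)
    interval_cases a n <;> simp

lemma Istr_zero (a : ℕ → ℕ) (n : ℕ) : Istr ((List.range n).map a) 0 = 0 := by
  induction n with
  | zero => simp [Istr]
  | succ n ih => rw [Istr_succ, ih]; simp

lemma Istr_one (a : ℕ → ℕ) (n : ℕ) : Istr ((List.range n).map a) 1 = 1 := by
  induction n with
  | zero => simp [Istr]
  | succ n ih => rw [Istr_succ, ih]; simp

lemma Istr_mem (a : ℕ → ℕ) (n : ℕ) {x : ℝ} (h0 : 0 < x) (h1 : x < 1) :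
    0 < Istr ((List.range n).map a) x ∧ Istr ((List.range n).map a) x < 1 := by
  induction n with
  | zero => simpa [Istr] using ⟨h0, h1⟩
  | succ n ih =>
    rw [Istr_succ]
    obtain ⟨i0, i1⟩ := ih
    split_ifs <;> constructor <;> nlinarith

lemma Istr_lt (a : ℕ → ℕ) (n : ℕ) {x y : ℝ} (h0 : 0 < x) (hxy : x < y) (h1 : y < 1) :
    Istr ((List.range n).map a) x < Istr ((List.range n).map a) y := by
  induction n with
  | zero => simpa [Istr] using hxy
  | succ n ih =>
    rw [Istr_succ, Istr_succ]
    have hx := Istr_mem a n h0 (hxy.trans h1)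
    have hy := Istr_mem a n (h0.trans hxy) h1
    split_ifs <;> nlinarith [hx.1, hy.2]

lemma invariant (a : ℕ → ℕ) (m : ℕ)
    (hpre : ∀ k, 1 ≤ k → k ≤ m → Istr ((List.range k).map a) (1 / 2) ≤ 1 / 2)
    {x : ℝ} (h0 : 0 < x) (h1 : x < 1 / 2) :
    PowInv (Istr ((List.range m).map a) x) (Istr ((List.range m).map a) (1 - x))
      (Istr ((List.range m).map a) (1 / 2)) := by
  induction m with
  | zero =>
    simp only [List.range_zero, List.map_nil, Istr]
    rw [PowInv.half h0 (by linarith)]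
    linarith
  | succ m ih =>
    have ih := ih (fun k hk hkm => hpre k hk (by omega))
    have hz := hpre (m + 1) (by omega) le_rfl
    rw [Istr_succ] at hz
    rw [Istr_succ, Istr_succ, Istr_succ]
    have hu := Istr_mem a m h0 (by linarith)
    have hv := Istr_mem a m (by linarith : 0 < 1 - x) (by linarith)
    have hzm := Istr_mem a m (by norm_num : (0 : ℝ) < 1 / 2) (by norm_num)
    have huv := Istr_lt a m h0 (by linarith : x < 1 - x) (by linarith)
    split_ifs at hz ⊢
    · exact ih.sq
    · exact ih.cosq hu.1 huv hv.2 hzm.1 hzm.2 hz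

lemma sum_ge_one (n : ℕ) (a : ℕ → ℕ)
    (hpre : ∀ m, 1 ≤ m → m ≤ n → Istr ((List.range m).map a) (1 / 2) ≤ 1 / 2)
    (hend : Istr ((List.range (n + 1)).map a) (1 / 2) ≥ 1 / 2) {x : ℝ} (h0 : 0 < x)
    (h1 : x < 1 / 2) :
    1 ≤ Istr ((List.range (n + 1)).map a) x + Istr ((List.range (n + 1)).map a) (1 - x) := by
  have hI := invariant a n hpre h0 h1
  have hu := Istr_mem a n h0 (by linarith)
  have hv := Istr_mem a n (by linarith : 0 < 1 - x) (by linarith)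
  have hz := Istr_mem a n (by norm_num : (0 : ℝ) < 1 / 2) (by norm_num)
  have huv := Istr_lt a n h0 (by linarith : x < 1 - x) (by linarith)
  have hz1 : Istr ((List.range n).map a) (1 / 2) ≤ 1 / 2 := by
    rcases Nat.eq_zero_or_pos n with rfl | hn
    · simp [Istr]
    · exact hpre n hn le_rfl
  rw [Istr_succ] at hend
  rw [Istr_succ, Istr_succ]
  split_ifs at hend ⊢
  · -- a final squaring would leave `z ≤ 1/4`
    exfalso
    nlinarith [hz.1]
  · exact hI.final hu.1 huv hv.2 hz.1 hz1 hend

end DyckPolar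

/-- Dyck-path corollary: if the bit string `a₁⋯aₙ` keeps `I` at most `1/2` on
all proper prefixes and at least `1/2` at the end, then `a₁⋯aₙ ≽ b₁⋯bₙ` where
`bⱼ = 1 − aⱼ`. -/
theorem stmt_19 (n : ℕ) (hn : 1 < n) (a : ℕ → ℕ) (ha : ∀ j < n, a j ≤ 1)
    (hpre : ∀ m, 1 ≤ m → m ≤ n - 1 →
      Istr ((List.range m).map a) (1 / 2) ≤ 1 / 2)
    (hend : Istr ((List.range n).map a) (1 / 2) ≥ 1 / 2) :
    ∀ x ∈ Set.Icc (0 : ℝ) 1,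
      Istr ((List.range n).map a) x ≥ Istr ((List.range n).map (fun j => 1 - a j)) x := by
  intro x hx
  rw [DyckPolar.Istr_compl a n ha]
  obtain ⟨k, rfl⟩ : ∃ k, n = k + 1 := ⟨n - 1, by omega⟩
  suffices h : 1 ≤ Istr ((List.range (k + 1)).map a) x
      + Istr ((List.range (k + 1)).map a) (1 - x) by linarith
  rcases hx.1.eq_or_lt with rfl | h0
  · rw [DyckPolar.Istr_zero, sub_zero, DyckPolar.Istr_one]; norm_num
  rcases hx.2.eq_or_lt with rfl | h1
  · rw [sub_self, DyckPolar.Istr_zero, DyckPolar.Istr_one]; norm_num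
  rcases lt_trichotomy x (1 / 2) with h | rfl | h
  · exact DyckPolar.sum_ge_one k a (by simpa using hpre) hend h0 h
  · rw [show (1 : ℝ) - 1 / 2 = 1 / 2 by norm_num]; linarith
  · have := DyckPolar.sum_ge_one k a (by simpa using hpre) hend (by linarith : 0 < 1 - x)
      (by linarith)
    rw [sub_sub_cancel] at this
    linarith
end
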